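/- arXiv:0806.4208 — 2 statements merged into one kernel-verified Lean document; each statement's English description precedes it below -/
import Mathlib

section
/- In any complex of Construction 1 (the general three-column red/blue construction), any four vertices contain three that do not form a triangle; equivalently, the complex has no face on four vertices and satisfies the hypothesis of Turán's (3,4)-problem. -/
/-- The missing-triangle predicate of Construction 1.  Vertices live in a linearly
ordered type; `col v` is the (cyclically arranged) column of `v`, with the column to
the right of `c` being `c + 1` and the column to the left being `c + 2`; `red v = true`
means `v` is colored red, `red v = false` means blue.  The predicate is to be applied
to triples with `z < y < x` and expresses that `{x, y, z}` is one of the four missing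
types:
1. three vertices in one column with the top two of the same color;
2. two vertices in one column with the higher of the two red, and one vertex in the
   column to its right;
3. two vertices in one column with the higher of the two blue, and one vertex in the
   column to its left;
4. two vertices in one column and one in another, the highest vertex in the left column
   (of the two columns involved) blue, the highest vertex in the right column red, and
   the two lowest vertices in the same column. -/
def MissingTriple {α : Type*} (col : α → Fin 3) (red : α → Bool) (x y z : α) : Prop :=
  -- type 1
  (col x = col y ∧ col y = col z ∧ red x = red y) ∨
  -- type 2
  ((col x = col y ∧ col z = col x + 1 ∧ red x = true) ∨
   (col x = col z ∧ col y = col x + 1 ∧ red x = true) ∨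
   (col y = col z ∧ col x = col y + 1 ∧ red y = true)) ∨
  -- type 3
  ((col x = col y ∧ col z = col x + 2 ∧ red x = false) ∨
   (col x = col z ∧ col y = col x + 2 ∧ red x = false) ∨
   (col y = col z ∧ col x = col y + 2 ∧ red y = false)) ∨
  -- type 4
  (col y = col z ∧ col x ≠ col y ∧
    ((col x = col y + 1 ∧ red y = false ∧ red x = true) ∨
     (col y = col x + 1 ∧ red x = false ∧ red y = true)))

/-- Missing triples only depend on the columns and colors. -/
def MissingData (x y z : Fin 3 × Bool) : Prop := MissingTriple Prod.fst Prod.snd x y z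

instance (x y z : Fin 3 × Bool) : Decidable (MissingData x y z) := by
  unfold MissingData MissingTriple
  infer_instance

set_option maxRecDepth 100000 in
set_option maxHeartbeats 4000000 in
theorem missing_aux : ∀ (ca cb cc cd : Fin 3) (ra rb rc rd : Bool),
    MissingData (cd, rd) (cc, rc) (cb, rb) ∨ MissingData (cd, rd) (cc, rc) (ca, ra) ∨
    MissingData (cd, rd) (cb, rb) (ca, ra) ∨ MissingData (cc, rc) (cb, rb) (ca, ra) := by
  decide +kernel

/-- In any complex of Construction 1, any four vertices contain three that do not form
a triangle: for any `a < b < c < d`, at least one of the four triples is a missing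
triangle.  Hence the complex has no face on four vertices and satisfies the hypotheses
of Turán's (3,4)-problem. -/
theorem construction1_no_four_face {n : ℕ}
    (col : Fin n → Fin 3) (red : Fin n → Bool) (a b c d : Fin n)
    (hab : a < b) (hbc : b < c) (hcd : c < d) :
    MissingTriple col red d c b ∨ MissingTriple col red d c a ∨
      MissingTriple col red d b a ∨ MissingTriple col red c b a := by
  have h := missing_aux (col a) (col b) (col c) (col d) (red a) (red b) (red c) (red d)
  exact h
end

section
/- For n = 3k+1 or n = 3k+2 with k ≥ 1, the number of non-isomorphic two-dimensional simplicial complexes on n vertices, having all minimal non-faces on 3 vertices and no faces on 4 vertices, that attain the bound of Turán's (3,4)-conjecture is at least (1/2)·6^(k−1) (for n = 3k+1) respectively 6^(k−1) (for n = 3k+2). -/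
/-- A two-dimensional complex on `Fin n`, all of whose minimal non-faces have 3
vertices and which has no face on 4 vertices, is determined by its set `T` of triangles
(all singletons and all pairs are faces); the conditions amount to requiring that every
4-element vertex set contains a 3-subset that is not a triangle. -/
def ValidTriangleFamily (n : ℕ) (T : Finset (Finset (Fin n))) : Prop :=
  (∀ t ∈ T, t.card = 3) ∧
    ∀ s : Finset (Fin n), s.card = 4 → ∃ t ⊆ s, t.card = 3 ∧ t ∉ T

/-- Two such complexes are isomorphic if a permutation of the vertices carries the
triangles of one bijectively onto the triangles of the other. -/
def IsoTriangleFamily (n : ℕ) (T₁ T₂ : Finset (Finset (Fin n))) : Prop :=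
  ∃ σ : Equiv.Perm (Fin n), ∀ t : Finset (Fin n), t ∈ T₁ ↔ t.image σ ∈ T₂

/-- The bound of Turán's (3,4)-conjecture, with `k = ⌊n/3⌋`. -/
def turanBound (n : ℕ) : ℚ :=
  let k : ℚ := (n / 3 : ℕ)
  if n % 3 = 0 then 5 / 2 * k ^ 3 - 3 / 2 * k ^ 2
  else if n % 3 = 1 then 5 / 2 * k ^ 3 + k ^ 2 - 1 / 2 * k
  else 5 / 2 * k ^ 3 + 7 / 2 * k ^ 2 + k

namespace TuranX

structure Fr where
  V : Type
  fin : Fintype V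
  dec : DecidableEq V
  κ : V → Fin 3
  r : V → V → Bool

attribute [instance] Fr.fin Fr.dec

abbrev Row := Bool ⊕ (Fin 3 × Bool × Bool)

def rc : Row → Fin 3 → Fin 3
  | .inl β, i => if β then i + 1 else i + 2
  | .inr (d, s, _), j => if j = d then (if s then d + 1 else d + 2) else d

def rg : Row → Fin 3 → Fin 3 → Bool
  | .inl β, i, j => decide ((if β then i + 1 else i + 2) = j)
  | .inr (d, s, β), x, y =>
    if x = (if s then d + 2 else d + 1) ∧ y = d then true
    else if x = d ∧ y = (if s then d + 1 else d + 2) then β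
    else if x = (if s then d + 1 else d + 2) ∧ y = d then !β
    else false

/-- Put a row of three new vertices on top of a frame. -/
abbrev ext (F : Fr) (ρ : Row) : Fr where
  V := F.V ⊕ Fin 3
  fin := inferInstance
  dec := inferInstance
  κ := Sum.elim F.κ (rc ρ)
  r := fun a b => match a, b with
    | .inl x, .inl y => F.r x y
    | .inl x, .inr i => decide (F.κ x = i)
    | .inr i, .inl x => decide (F.κ x ≠ i ∧ F.κ x ≠ rc ρ i)
    | .inr i, .inr j => rg ρ i j

def core (k1 k2 k3 : Fin 3) (r12 r21 r13 r31 r23 r32 : Bool) : Bool :=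
  !(decide (k1 = k2) && decide (k2 = k3)) && !(r12 && r13) && !(r21 && r23) && !(r31 && r32)

def Fr.cr (F : Fr) (x y z : F.V) : Bool :=
  core (F.κ x) (F.κ y) (F.κ z) (F.r x y) (F.r y x) (F.r x z) (F.r z x) (F.r y z) (F.r z y)

def Fr.T (F : Fr) (x y z : F.V) : Prop :=
  x ≠ y ∧ x ≠ z ∧ y ≠ z ∧ F.cr x y z = true

instance (F : Fr) (x y z : F.V) : Decidable (F.T x y z) := by unfold Fr.T; infer_instance

structure Ok (F : Fr) : Prop where
  same : ∀ x y, F.κ x = F.κ y → F.r x y = false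
  diff : ∀ x y, F.κ x ≠ F.κ y → F.r x y = !F.r y x
  c4 : ∀ x x' y y', F.κ x = F.κ x' → F.κ y = F.κ y' →
    ¬ (F.r x y = true ∧ F.r y x' = true ∧ F.r x' y' = true ∧ F.r y' x = true)

abbrev Ch := Fin 3 × Bool

def chRow (m : Bool) (l : Fin 3) (c : Ch) : Row :=
  if c.1 = 0 then .inl c.2 else
    if m then .inr (l + c.1, decide (c.1 = 1), c.2) else .inr (l, decide (c.1 = 1), c.2)

def chL (m : Bool) (l : Fin 3) (c : Ch) : Fin 3 := if m then l + c.1 else l - c.1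

def base (m : Bool) : Fr :=
  if m then ⟨Unit, inferInstance, inferInstance, fun _ => 0, fun _ _ => false⟩
  else ⟨Bool, inferInstance, inferInstance, fun b => if b then 1 else 0, fun a b => !a && b⟩

def bl (m : Bool) : List Ch → Fin 3
  | [] => if m then 0 else 2
  | c :: w => chL m (bl m w) c

def bf (m : Bool) : List Ch → Fr
  | [] => base m
  | c :: w => ext (bf m w) (chRow m (bl m w) c)

structure FIso (F G : Fr) (σ : F.V ≃ G.V) (π : Equiv.Perm (Fin 3)) : Prop where
  κ : ∀ x, G.κ (σ x) = π (F.κ x)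
  r : ∀ x y, G.r (σ x) (σ y) = F.r x y

theorem rc_ne (ρ : Row) (i : Fin 3) : rc ρ i ≠ i := by revert ρ i; decide
theorem rg_same (ρ : Row) (i j : Fin 3) : rc ρ i = rc ρ j → rg ρ i j = false := by
  revert ρ i j; decide
theorem rg_diff (ρ : Row) (i j : Fin 3) : rc ρ i ≠ rc ρ j → rg ρ i j = !rg ρ j i := by
  revert ρ i j; decide
theorem rg_int (ρ : Row) (i j : Fin 3) : rc ρ i ≠ rc ρ j → (rc ρ i = j ↔ rc ρ j ≠ i) →
   rg ρ i j = decide (rc ρ i = j) := by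
  revert ρ i j; decide

theorem ext_ok {F : Fr} (h : Ok F) (ρ : Row) : Ok (ext F ρ) where
  same := by
    rintro (x | i) (y | j) e
    · exact h.same x y e
    · have := rc_ne ρ j
      simp only [ext, Sum.elim_inl, Sum.elim_inr] at e ⊢
      simp_all
    · simp only [ext, Sum.elim_inl, Sum.elim_inr] at e ⊢
      simp_all
    · exact rg_same ρ i j e
  diff := by
    rintro (x | i) (y | j) e
    · exact h.diff x y e
    · have := rc_ne ρ j
      simp only [ext, Sum.elim_inl, Sum.elim_inr] at e ⊢
      simp_all
    · have := rc_ne ρ i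
      simp only [ext, Sum.elim_inl, Sum.elim_inr] at e ⊢
      have e' := Ne.symm e
      simp_all
    · exact rg_diff ρ i j e
  c4 := by
    have D1 : ∀ (ρ : Row) (i j : Fin 3) (k l : Fin 3), k = rc ρ i → l = rc ρ j →
      ¬ (rg ρ i j = true ∧ (k ≠ j ∧ k ≠ rc ρ j) ∧ l = i) := by decide
    have D2 : ∀ (ρ : Row) (i i' j : Fin 3) (k : Fin 3), rc ρ i = rc ρ i' → k = rc ρ j →
      ¬ (rg ρ i j = true ∧ rg ρ j i' = true ∧ (k ≠ i' ∧ k ≠ rc ρ i') ∧ k = i) := by decide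
    have D3 : ∀ (ρ : Row) (i i' j j' : Fin 3), rc ρ i = rc ρ i' → rc ρ j = rc ρ j' →
      ¬ (rg ρ i j = true ∧ rg ρ j i' = true ∧ rg ρ i' j' = true ∧ rg ρ j' i = true) := by
      decide
    rintro (x | i) (x' | i') (y | j) (y' | j') e e'
    case inl.inl.inl.inl => exact h.c4 x x' y y' e e'
    case inr.inr.inr.inr => exact D3 ρ i i' j j' e e'
    all_goals
      simp only [ext, Sum.elim_inl, Sum.elim_inr, decide_eq_true_eq] at e e' ⊢
    all_goals rintro ⟨a, b, c, d⟩
    all_goals first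
      | (clear D1 D2 D3; simp_all; done)
      | (clear D1 D2 D3; grind)
      | exact D1 ρ _ _ _ _ e.symm e'.symm ⟨by assumption, by assumption, by assumption⟩
      | exact D1 ρ _ _ _ _ e'.symm e ⟨by assumption, by assumption, by assumption⟩
      | exact D1 ρ _ _ _ _ e e' ⟨by assumption, by assumption, by assumption⟩
      | exact D1 ρ _ _ _ _ e' e.symm ⟨by assumption, by assumption, by assumption⟩
      | exact D1 ρ _ _ _ _ e e'.symm ⟨by assumption, by assumption, by assumption⟩
      | exact D1 ρ _ _ _ _ e.symm e' ⟨by assumption, by assumption, by assumption⟩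
      | exact D1 ρ _ _ _ _ e' e ⟨by assumption, by assumption, by assumption⟩
      | exact D1 ρ _ _ _ _ e'.symm e.symm ⟨by assumption, by assumption, by assumption⟩
      | exact D2 ρ _ _ _ _ e e' ⟨a, b, c, d⟩
      | exact D2 ρ _ _ _ _ e e'.symm ⟨a, b, c, d⟩
      | exact D2 ρ _ _ _ _ e e'.symm ⟨c, d, a, b⟩
      | exact D2 ρ _ _ _ _ e.symm e' ⟨c, d, a, b⟩
      | exact D2 ρ _ _ _ _ e.symm e'.symm ⟨c, d, a, b⟩
      | exact D2 ρ _ _ _ _ e' e ⟨b, c, d, a⟩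
      | exact D2 ρ _ _ _ _ e' e.symm ⟨b, c, d, a⟩
      | exact D2 ρ _ _ _ _ e'.symm e ⟨d, a, b, c⟩
      | exact D2 ρ _ _ _ _ e'.symm e.symm ⟨d, a, b, c⟩
theorem base_ok (m : Bool) : Ok (base m) := by
  cases m
  · exact ⟨by decide, by decide, by decide⟩
  · exact ⟨by decide, by decide, by decide⟩

theorem bf_ok (m : Bool) (w : List Ch) : Ok (bf m w) := by
  induction w with
  | nil => exact base_ok m
  | cons c w ih => exact ext_ok ih _

section basic
variable {F : Fr}

theorem T_rot {x y z : F.V} (h : F.T x y z) : F.T y z x := by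
  obtain ⟨a, b, c, d⟩ := h
  refine ⟨c, a.symm, b.symm, ?_⟩
  revert d
  unfold Fr.cr
  generalize F.κ x = k1
  generalize F.κ y = k2
  generalize F.κ z = k3
  generalize F.r x y = r1
  generalize F.r y x = r2
  generalize F.r x z = r3
  generalize F.r z x = r4
  generalize F.r y z = r5
  generalize F.r z y = r6
  simp only [core, Bool.and_eq_true, Bool.not_eq_true', Bool.and_eq_false_iff,
    decide_eq_false_iff_not]
  grind

theorem T_swap {x y z : F.V} (h : F.T x y z) : F.T y x z := by
  obtain ⟨a, b, c, d⟩ := h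
  refine ⟨a.symm, c, b, ?_⟩
  revert d
  unfold Fr.cr
  simp only [core, Bool.and_eq_true, Bool.not_eq_true', Bool.and_eq_false_iff,
    decide_eq_false_iff_not]
  grind

theorem T_flip {x y z : F.V} (h : F.T x y z) : F.T x z y := T_rot (T_swap h)

theorem T_out {x y z : F.V} (h : F.T x y z) : ¬ (F.r x y = true ∧ F.r x z = true) ∧
    ¬ (F.r y x = true ∧ F.r y z = true) ∧ ¬ (F.r z x = true ∧ F.r z y = true) := by
  obtain ⟨a, b, c, d⟩ := h
  revert d
  unfold Fr.cr
  simp only [core, Bool.and_eq_true, Bool.not_eq_true', Bool.and_eq_false_iff,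
    decide_eq_false_iff_not]
  grind

theorem cr_same {x y z : F.V}
   (h : F.T x y z) (e : F.κ x = F.κ y) :
    F.κ z ≠ F.κ x ∧ (F.r z x = true → F.r z y = false) := by
  obtain ⟨a, b, c, d⟩ := h
  revert d
  unfold Fr.cr
  simp only [core, Bool.and_eq_true, Bool.not_eq_true', Bool.and_eq_false_iff,
    decide_eq_false_iff_not]
  grind

/-- Among four vertices some triple is not a face. -/
theorem no_four (h : Ok F) (x y z t : F.V) (h1 : F.T x y z) (h2 : F.T x y t) (h3 : F.T x z t)
    (h4 : F.T y z t) : False := by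
  -- two of them share a column
  have key : ∀ x y z t : F.V, F.T x y z → F.T x y t → F.T x z t → F.T y z t →
      F.κ x = F.κ y → False := by
    clear * - h
    intro x y z t h1 h2 h3 h4 e
    have a1 := cr_same h1 e
    have a2 := cr_same h2 e
    have d1 := h.diff x z (Ne.symm a1.1)
    have d2 := h.diff x t (Ne.symm a2.1)
    have d3 := h.diff y z (by rw [← e]; exact Ne.symm a1.1)
    have d4 := h.diff y t (by rw [← e]; exact Ne.symm a2.1)
    by_cases e2 : F.κ z = F.κ t
    · have a3 := cr_same (T_rot h3) e2
      have a4 := cr_same (T_rot h4) e2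
      have c1 := h.c4 x y z t e e2
      have c2 := h.c4 x y t z e e2.symm
      grind
    · have d5 := h.diff z t e2
      have b1 := T_out h3
      have b2 := T_out h4
      grind
  have P : ∀ a b c d : Fin 3, a = b ∨ a = c ∨ a = d ∨ b = c ∨ b = d ∨ c = d := by decide
  rcases P (F.κ x) (F.κ y) (F.κ z) (F.κ t) with e | e | e | e | e | e
  · exact key _ _ _ _ h1 h2 h3 h4 e
  · exact key x z y t (T_flip h1) h3 h2 (T_swap h4) e
  · exact key x t y z (T_flip h2) (T_flip h3) h1 (T_rot (T_rot h4)) e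
  · exact key y z x t (T_rot h1) h4 (T_swap h2) (T_swap h3) e
  · exact key y t x z (T_rot h2) (T_flip h4) (T_swap h1) (T_rot (T_rot h3)) e
  · exact key z t x y (T_rot h3) (T_rot h4) (T_rot (T_rot h1)) (T_rot (T_rot h2)) e
end basic
end TuranX

namespace TuranX

section top
variable {V : Type} {T : V → V → V → Prop}

structure Sy (T : V → V → V → Prop) : Prop where
  swap : ∀ x y z, T x y z ↔ T y x z
  rot : ∀ x y z, T x y z ↔ T y z x
  ne : ∀ x y z, T x y z → x ≠ y

structure Top (T : V → V → V → Prop) (a : Fin 3 → V) (κ : V → Fin 3) (r : V → V → Prop) :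
    Prop where
  inj : ∀ i j, i ≠ j → a i ≠ a j
  t3 : ∀ i j l, i ≠ j → i ≠ l → j ≠ l → T (a i) (a j) (a l)
  t2 : ∀ i j x, i ≠ j → (∀ l, x ≠ a l) → (T (a i) (a j) x ↔ (κ x = i ∨ κ x = j))
  t1s : ∀ i x y, (∀ l, x ≠ a l) → (∀ l, y ≠ a l) → x ≠ y → κ x = κ y →
    (T (a i) x y ↔ κ x = i)
  t1d : ∀ i x y, (∀ l, x ≠ a l) → (∀ l, y ≠ a l) → κ x ≠ κ y → κ x ≠ i → κ y ≠ i →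
    T (a i) x y
  t1m : ∀ i x y, (∀ l, x ≠ a l) → (∀ l, y ≠ a l) → κ x = i → κ y ≠ i →
    (T (a i) x y ↔ r y x)
  rel : ∀ x y, (∀ l, x ≠ a l) → (∀ l, y ≠ a l) → κ x ≠ κ y → (r x y ↔ ¬ r y x)
  c0 : ∀ x y z, (∀ l, x ≠ a l) → (∀ l, y ≠ a l) → (∀ l, z ≠ a l) → κ x = κ y → κ y = κ z →
    ¬ T x y z
  c1 : ∀ x y z, (∀ l, x ≠ a l) → (∀ l, y ≠ a l) → (∀ l, z ≠ a l) → x ≠ y →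
    κ x = κ y → κ x ≠ κ z →
    (T x y z ↔ ¬ (r z x ∧ r z y))
  c2 : ∀ x y z, (∀ l, x ≠ a l) → (∀ l, y ≠ a l) → (∀ l, z ≠ a l) → κ x ≠ κ y → κ x ≠ κ z →
    κ y ≠ κ z → (T x y z ↔ ((r x y ∧ r y z ∧ r z x) ∨ (r y x ∧ r z y ∧ r x z)))

def Tw (T : V → V → V → Prop) (u v : V) : Prop :=
  ∀ x y, x ≠ u → x ≠ v → y ≠ u → y ≠ v → (T u x y ↔ T v x y)

theorem F3 (i j l k : Fin 3) (h1 : i ≠ j) (h2 : i ≠ l) (h3 : j ≠ l) : k = i ∨ k = j ∨ k = l := by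
  revert i j l k; decide

theorem ov2 (S : Sy T) {a b : Fin 3 → V} {κ κ' : V → Fin 3} {r r' : V → V → Prop}
    (A : Top T a κ r) (B : Top T b κ' r') (i j l p q s : Fin 3)
    (ij : i ≠ j) (il : i ≠ l) (jl : j ≠ l) (pq : p ≠ q) (ps : p ≠ s) (qs : q ≠ s)
    (e1 : b p = a i) (e2 : b q = a j) (e3 : ∀ k, b s ≠ a k) (kb : κ (b s) = j) :
    (∀ k, a l ≠ b k) ∧ (∀ x, (∀ k, x ≠ a k) → x ≠ b s → κ x = l → r x (b s)) ∧
    (∀ x, (∀ k, x ≠ a k) → x ≠ b s → κ x = i → r (b s) x) := by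
  have h0 : ∀ k, a l ≠ b k := by
    intro k hk
    rcases F3 p q s k pq ps qs with rfl | rfl | rfl
    · exact A.inj l i il.symm (hk.trans e1)
    · exact A.inj l j jl.symm (hk.trans e2)
    · exact e3 l hk.symm
  have nb : ∀ x, (∀ k, x ≠ a k) → x ≠ b s → ∀ k, x ≠ b k := by
    intro x hx hs k
    rcases F3 p q s k pq ps qs with rfl | rfl | rfl
    · rw [e1]; exact hx i
    · rw [e2]; exact hx j
    · exact hs
  refine ⟨h0, ?_, ?_⟩
  · intro x hx hs hk
    have hb := nb x hx hs
    have m := A.t1m j (b s) x e3 hx kb (by grind)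
    have m1 := A.t2 i j x ij hx
    have n1 := F3 p q s (κ' x) pq ps qs
    have m2 := B.t2 p q x pq hb
    have m3 := B.t2 q s x qs hb
    clear h0 nb e3 hb hx
    grind
  · intro x hx hs hk
    have hb := nb x hx hs
    have m := A.t1m j (b s) x e3 hx kb (by grind)
    have m' := A.t1m i x (b s) hx e3 hk (by grind)
    have m1 := A.t2 i j x ij hx
    have m2 := A.t2 i l (b s) il e3
    have m3 := A.t2 j l (b s) jl e3
    have m4 := A.t2 j l x jl hx
    have m5 := B.t2 p s x ps hb
    have m6 := B.t2 p q x pq hb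
    have m7 := B.t2 q s x qs hb
    have m8 := B.t2 p q _ pq h0
    have m9 := B.t2 p s _ ps h0
    have m10 := B.t2 q s _ qs h0
    have n1 := F3 p q s (κ' x) pq ps qs
    have n2 := F3 p q s (κ' (a l)) pq ps qs
    have n3 := B.t1s q x (a l) hb h0 (hx l)
    have n4 := A.t3 i j l ij il jl
    have n5 := A.rel x (b s) hx e3
    have s1 := S.swap
    have s2 := S.rot
    clear nb h0 e3 hb
    grind

/-- the sufficient condition for being twins -/
def Cr (a : Fin 3 → V) (κ : V → Fin 3) (r : V → V → Prop) (u : V)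
    (l : Fin 3) : Prop :=
  κ u ≠ l ∧ ∀ x, (∀ k, x ≠ a k) → x ≠ u → (κ x = l → r x u) ∧ (κ x ≠ l → κ x ≠ κ u → r u x)

theorem ov1b (S : Sy T) {a b : Fin 3 → V} {κ κ' : V → Fin 3} {r r' : V → V → Prop}
    (A : Top T a κ r) (B : Top T b κ' r') (i j l p q s : Fin 3)
    (ij : i ≠ j) (il : i ≠ l) (jl : j ≠ l) (pq : p ≠ q) (ps : p ≠ s) (qs : q ≠ s)
    (e1 : b p = a i) (e2 : ∀ k, b q ≠ a k) (e3 : ∀ k, b s ≠ a k) (ku : κ (b q) = i)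
    (kv : κ (b s) = j) (nb : ∀ x, (∀ k, x ≠ a k) → x ≠ b q → x ≠ b s → ∀ k, x ≠ b k)
    (hj : ∀ k, a j ≠ b k) (hl : ∀ k, a l ≠ b k) :
    ∀ x, (∀ k, x ≠ a k) → x ≠ b q → (κ x = j → r x (b q)) ∧ (κ x = l → r (b q) x) := by
  have f := B.t3 p q s pq ps qs
  have f1 := A.t1m i (b q) (b s) e2 e3 ku (by grind)
  have z1 := A.t2 i j (b q) ij e2
  have z2 := A.t2 i j (b s) ij e3
  have z3 := A.t2 i l (b q) il e2
  have z4 := A.t2 i l (b s) il e3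
  have y1 := B.t2 p q (a j) pq hj
  have y2 := B.t2 p s (a j) ps hj
  have y3 := B.t2 p q (a l) pq hl
  have y4 := B.t2 p s (a l) ps hl
  have y5 := F3 p q s (κ' (a j)) pq ps qs
  have y6 := F3 p q s (κ' (a l)) pq ps qs
  have s1 := S.swap
  have s2 := S.rot
  have k1 : κ' (a j) = p := by
    clear nb hj hl e2 e3
    grind
  have k2 : κ' (a l) = q := by
    clear nb hj hl e2 e3
    grind
  intro x hx hq
  by_cases hs : x = b s
  · subst hs
    clear nb hj hl e2 e3
    grind
  have hb := nb x hx hq hs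
  have m1 := A.t1m i (b q) x e2 hx ku
  have m2 := B.t2 p q x pq hb
  have m3 := B.t2 p s x ps hb
  have m4 := F3 p q s (κ' x) pq ps qs
  have r1 := A.rel x (b q) hx e2
  constructor
  · intro hk
    have m2 := A.t1s i (b s) x e3 hx (Ne.symm hs)
    clear nb hj hl e2 e3 hb hx
    grind
  · intro hk
    have m5 := A.t1d i (b s) x e3 hx
    have m6 := A.t2 i j x ij hx
    have m7 := B.t1s p (a j) x hj hb (Ne.symm (hx j))
    clear nb hj hl e2 e3 hb hx
    grind

theorem ov1a (S : Sy T) {a b : Fin 3 → V} {κ κ' : V → Fin 3} {r r' : V → V → Prop}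
    (A : Top T a κ r) (B : Top T b κ' r') (i j l p q s : Fin 3)
    (ij : i ≠ j) (il : i ≠ l) (jl : j ≠ l) (pq : p ≠ q) (ps : p ≠ s) (qs : q ≠ s)
    (e1 : b p = a i) (e2 : ∀ k, b q ≠ a k) (e3 : ∀ k, b s ≠ a k) (ku : κ (b q) = i)
    (kv : κ (b s) = i) (nb : ∀ x, (∀ k, x ≠ a k) → x ≠ b q → x ≠ b s → ∀ k, x ≠ b k)
    (hj : ∀ k, a j ≠ b k) (hl : ∀ k, a l ≠ b k) :
    (∀ x, (∀ k, x ≠ a k) → x ≠ b q → (κ x = j → r x (b q)) ∧ (κ x = l → r (b q) x)) ∨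
    (∀ x, (∀ k, x ≠ a k) → x ≠ b q → (κ x = l → r x (b q)) ∧ (κ x = j → r (b q) x)) := by
  have f := B.t3 p q s pq ps qs
  have z1 := A.t2 i j (b q) ij e2
  have z2 := A.t2 i j (b s) ij e3
  have z3 := A.t2 i l (b q) il e2
  have z4 := A.t2 i l (b s) il e3
  have y1 := B.t2 p q (a j) pq hj
  have y2 := B.t2 p s (a j) ps hj
  have y3 := B.t2 p q (a l) pq hl
  have y4 := B.t2 p s (a l) ps hl
  have y5 := F3 p q s (κ' (a j)) pq ps qs
  have y6 := F3 p q s (κ' (a l)) pq ps qs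
  have s1 := S.swap
  have s2 := S.rot
  have k1 : κ' (a j) = p := by
    clear nb hj hl e2 e3
    grind
  have k2 : κ' (a l) = p := by
    clear nb hj hl e2 e3
    grind
  have N : ∀ x, (∀ k, x ≠ a k) → κ x ≠ i → (∀ k, x ≠ b k) := by
    intro x hx hk
    exact nb x hx (by grind) (by grind)
  have X : ∀ x, (∀ k, x ≠ a k) → κ x ≠ i → (r x (b q) ∧ κ' x = q) ∨ (¬ r x (b q) ∧ κ' x = s) := by
    intro x hx hk
    have hb := N x hx hk
    have m1 := A.t1m i (b q) x e2 hx ku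
    have m1' := A.t1m i (b s) x e3 hx kv
    have m2 := B.t2 p q x pq hb
    have m3 := B.t2 p s x ps hb
    have m4 := F3 p q s (κ' x) pq ps qs
    have m5 := A.c1 (b q) (b s) x e2 e3 hx (B.inj q s qs)
    have m6 := A.t2 i j x ij hx
    have m7 := B.t1s p (a j) x hj hb (Ne.symm (hx j))
    have m6' := A.t2 i l x il hx
    have m7' := B.t1s p (a l) x hl hb (Ne.symm (hx l))
    have m8 := F3 i j l (κ x) ij il jl
    clear nb hj hl e2 e3 hb hx N
    grind
  have Y : ∀ x y, (∀ k, x ≠ a k) → (∀ k, y ≠ a k) → κ x ≠ i → κ y ≠ i → κ x = κ y →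
      (r x (b q) ↔ r y (b q)) := by
    intro x y hx hy kx ky hk
    by_cases xy : x = y
    · rw [xy]
    have m1 := X x hx kx
    have m2 := X y hy ky
    have m3 := A.t1s i x y hx hy xy hk
    have m4 := B.t1d p x y (N x hx kx) (N y hy ky)
    clear X nb hj hl e2 e3 hx hy N
    grind
  have Z : ∀ x y, (∀ k, x ≠ a k) → (∀ k, y ≠ a k) → κ x ≠ i → κ y ≠ i → κ x ≠ κ y →
      (r x (b q) ↔ ¬ r y (b q)) := by
    intro x y hx hy kx ky hk
    have m1 := X x hx kx
    have m2 := X y hy ky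
    have m3 := A.t1d i x y hx hy hk
    have m4 := B.t1s p x y (N x hx kx) (N y hy ky) (fun h => hk (h ▸ rfl))
    clear X nb hj hl e2 e3 hx hy N
    grind
  by_contra hc
  rw [not_or] at hc
  obtain ⟨h1, h2⟩ := hc
  push Not at h1 h2
  obtain ⟨x, hx, -, h1⟩ := h1
  obtain ⟨y, hy, -, h2⟩ := h2
  have r1 := A.rel x (b q) hx e2
  have r2 := A.rel y (b q) hy e2
  have := Y x y hx hy
  have := Z x y hx hy
  clear X Y Z nb hj hl e2 e3 hx hy N
  grind

theorem ov1c (S : Sy T) {a b : Fin 3 → V} {κ κ' : V → Fin 3} {r r' : V → V → Prop}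
    (A : Top T a κ r) (B : Top T b κ' r') (i p q s : Fin 3)
    (pq : p ≠ q) (ps : p ≠ s) (qs : q ≠ s)
    (e1 : b p = a i) (e2 : ∀ k, b q ≠ a k) (e3 : ∀ k, b s ≠ a k)
    (ha : ∀ j, j ≠ i → ∀ k, a j ≠ b k) : κ (b q) = i ∨ κ (b s) = i := by
  by_contra hc
  rw [not_or] at hc
  obtain ⟨h1, h2⟩ := hc
  have f := B.t3 p q s pq ps qs
  have f1 := A.t1s i (b q) (b s) e2 e3 (B.inj q s qs)
  have hn : κ (b q) ≠ κ (b s) := by grind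
  have hj := ha _ h1
  have hl := ha _ h2
  have z1 := A.t2 i _ (b q) (Ne.symm h1) e2
  have z2 := A.t2 i _ (b s) (Ne.symm h1) e3
  have z3 := A.t2 i _ (b q) (Ne.symm h2) e2
  have z4 := A.t2 i _ (b s) (Ne.symm h2) e3
  have y1 := B.t2 p q _ pq hj
  have y2 := B.t2 p s _ ps hj
  have y1' := B.t2 q s _ qs hj
  have y3 := B.t2 p q _ pq hl
  have y4 := B.t2 p s _ ps hl
  have y4' := B.t2 q s _ qs hl
  have y5 := F3 p q s (κ' (a (κ (b q)))) pq ps qs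
  have y6 := F3 p q s (κ' (a (κ (b s)))) pq ps qs
  have m1 := A.t1m _ (b q) (b s) e2 e3 rfl (Ne.symm hn)
  have m2 := A.t1m _ (b s) (b q) e3 e2 rfl hn
  have m3 := A.rel _ _ e2 e3 hn
  have s1 := S.swap
  have s2 := S.rot
  clear hj hl e2 e3
  grind

theorem ov0a (S : Sy T) {a b : Fin 3 → V} {κ κ' : V → Fin 3} {r r' : V → V → Prop}
    (A : Top T a κ r) (B : Top T b κ' r') (p q s : Fin 3)
    (pq : p ≠ q) (ps : p ≠ s) (qs : q ≠ s) (e : ∀ m k, b m ≠ a k)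
    (h1 : κ (b p) = κ (b q)) (h2 : κ (b p) ≠ κ (b s)) : False := by
  have f := B.t3 p q s pq ps qs
  have c := A.c1 (b p) (b q) (b s) (e p) (e q) (e s) (B.inj p q pq) h1 h2
  have R1 := A.rel (b p) (b s) (e p) (e s) h2
  have R2 := A.rel (b q) (b s) (e q) (e s) (h1 ▸ h2)
  have hi : ∀ k, a (κ (b p)) ≠ b k := fun k => (e k _).symm
  have hj : ∀ k, a (κ (b s)) ≠ b k := fun k => (e k _).symm
  have y1 := B.t2 p q _ pq hi
  have y2 := B.t2 p s _ ps hi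
  have y3 := B.t2 q s _ qs hi
  have z1 := B.t2 p q _ pq hj
  have z2 := B.t2 p s _ ps hj
  have z3 := B.t2 q s _ qs hj
  have y5 := F3 p q s (κ' (a (κ (b p)))) pq ps qs
  have y6 := F3 p q s (κ' (a (κ (b s)))) pq ps qs
  have m1 := A.t1m _ (b p) (b s) (e p) (e s) rfl h2.symm
  have m2 := A.t1m _ (b q) (b s) (e q) (e s) h1.symm h2.symm
  have m3 := A.t1m _ (b s) (b p) (e s) (e p) rfl h2
  have m4 := A.t1m _ (b s) (b q) (e s) (e q) rfl (h1 ▸ h2)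
  have m5 := A.t1s (κ (b s)) (b p) (b q) (e p) (e q) (B.inj p q pq) h1
  have s1 := S.swap
  have s2 := S.rot
  clear hi hj e
  grind

theorem ov0b (S : Sy T) {a b : Fin 3 → V} {κ κ' : V → Fin 3} {r r' : V → V → Prop}
    (A : Top T a κ r) (B : Top T b κ' r') (p q s : Fin 3)
    (pq : p ≠ q) (ps : p ≠ s) (qs : q ≠ s) (e : ∀ m k, b m ≠ a k)
    (h1 : κ (b p) ≠ κ (b q)) (h2 : κ (b p) ≠ κ (b s)) (h3 : κ (b q) ≠ κ (b s))
    (r1 : r (b p) (b q)) (r2 : r (b q) (b s)) (r3 : r (b s) (b p)) :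
    ∀ x, (∀ k, x ≠ a k) → x ≠ b p → κ x = κ (b p) → r x (b q) ∧ r (b s) x := by
  intro x hx hp hk
  have hb : ∀ k, x ≠ b k := by
    intro k
    rcases F3 p q s k pq ps qs with rfl | rfl | rfl
    · exact hp
    · rintro rfl; exact h1 hk.symm
    · rintro rfl; exact h2 hk.symm
  have hj : ∀ k, a (κ (b q)) ≠ b k := fun k => (e k _).symm
  have q1 := A.rel (b p) (b q) (e p) (e q) h1
  have q2 := A.rel (b p) (b s) (e p) (e s) h2
  have q3 := A.rel (b q) (b s) (e q) (e s) h3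
  have q4 := A.rel (b q) x (e q) hx (hk ▸ h1.symm)
  have q5 := A.rel (b s) x (e s) hx (hk ▸ h2.symm)
  have z1 := B.t2 p q _ pq hj
  have z2 := B.t2 p s _ ps hj
  have z3 := B.t2 q s _ qs hj
  have w1 := B.t2 p q _ pq hb
  have w2 := B.t2 p s _ ps hb
  have w3 := B.t2 q s _ qs hb
  have y5 := F3 p q s (κ' (a (κ (b q)))) pq ps qs
  have y6 := F3 p q s (κ' x) pq ps qs
  have m1 := A.t1m _ (b q) (b p) (e q) (e p) rfl h1
  have m2 := A.t1m _ (b q) (b s) (e q) (e s) rfl h3.symm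
  have m3 := A.t1d (κ (b q)) (b p) (b s) (e p) (e s) h2 h1 h3.symm
  have c1 := A.c1 (b p) x (b q) (e p) hx (e q) (Ne.symm hp) hk.symm h1
  have c2 := A.c1 (b p) x (b s) (e p) hx (e s) (Ne.symm hp) hk.symm h2
  have c3 := A.c2 (b q) (b s) x (e q) (e s) hx h3 (hk ▸ h1.symm) (hk ▸ h2.symm)
  have n1 := A.t1s (κ (b q)) (b p) x (e p) hx (Ne.symm hp) hk.symm
  have n2 := B.t1s p (a (κ (b q))) x hj hb (Ne.symm (hx _))
  have s1 := S.swap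
  have s2 := S.rot
  clear hb hj e hx
  grind

theorem tw_of_cr (S : Sy T) {a : Fin 3 → V} {κ : V → Fin 3} {r : V → V → Prop}
    (A : Top T a κ r) (u : V) (l : Fin 3) (hu : ∀ k, u ≠ a k) (h : Cr a κ r u l) :
    Tw T u (a l) := by
  obtain ⟨h0, h⟩ := h
  have half : ∀ x y, x ≠ u → x ≠ a l → (∀ k, y ≠ a k) → y ≠ u → y ≠ a l →
      (T u x y ↔ T (a l) x y) := by
    intro x y xu xl hy yu yl
    by_cases hx : ∀ k, x ≠ a k
    · by_cases xy : x = y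
      · subst xy
        have := S.ne
        have := S.rot
        clear hx hy hu
        grind
      have h1 := h x hx xu
      have h2 := h y hy yu
      have R1 := A.rel x y hx hy
      have R2 := A.rel x u hx hu
      have R3 := A.rel y u hy hu
      have m1 := A.t1s l x y hx hy xy
      have m2 := A.t1d l x y hx hy
      have m3 := A.t1m l x y hx hy
      have m4 := A.t1m l y x hy hx
      have c0 := A.c0 x y u hx hy hu
      have c1 := A.c1 x y u hx hy hu xy
      have c2 := A.c1 u x y hu hx hy (Ne.symm xu)
      have c3 := A.c1 u y x hu hy hx (Ne.symm yu)
      have c4 := A.c2 u x y hu hx hy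
      have s1 := S.swap
      have s2 := S.rot
      have P : ∀ a b c d : Fin 3, a = b ∨ a = c ∨ a = d ∨ b = c ∨ b = d ∨ c = d := by decide
      have p1 := P (κ x) (κ y) (κ u) l
      clear P h hx hy hu
      grind
    · push Not at hx
      obtain ⟨m, rfl⟩ := hx
      have hm : m ≠ l := fun e => xl (by rw [e])
      have h2 := h y hy yu
      have R3 := A.rel y u hy hu
      have m1 := A.t1s m u y hu hy (Ne.symm yu)
      have m2 := A.t1d m u y hu hy
      have m3 := A.t1m m u y hu hy
      have m4 := A.t1m m y u hy hu
      have m5 := A.t2 l m y hm.symm hy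
      have P : ∀ a b c d : Fin 3, a = b ∨ a = c ∨ a = d ∨ b = c ∨ b = d ∨ c = d := by decide
      have p1 := P (κ y) m (κ u) l
      have s1 := S.swap
      have s2 := S.rot
      clear P h hy hu
      grind
  intro x y xu xl yu yl
  by_cases hy : ∀ k, y ≠ a k
  · exact half x y xu xl hy yu yl
  by_cases hx : ∀ k, x ≠ a k
  · have := half y x yu yl hx xu xl
    have fl : ∀ u x y, T u x y ↔ T u y x := fun u x y => by rw [S.swap, S.rot]
    rw [fl u, fl (a l), this]
  push Not at hx hy
  obtain ⟨m, rfl⟩ := hx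
  obtain ⟨m', rfl⟩ := hy
  by_cases e : m = m'
  · subst e
    have := S.ne
    have := S.rot
    clear hu half
    grind
  have hm : m ≠ l := fun e => xl (by rw [e])
  have hm' : m' ≠ l := fun e => yl (by rw [e])
  have t := A.t3 l m m' hm.symm hm'.symm e
  have t2 := A.t2 m m' u e hu
  have := F3 l m m' (κ u) hm.symm hm'.symm e
  have s2 := S.rot
  clear half h hu
  grind


def Good (T : V → V → V → Prop) (a b : Fin 3 → V) : Prop :=
  ∃ m l, (∀ k, b m ≠ a k) ∧ (∀ k, a l ≠ b k) ∧ Tw T (b m) (a l)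

theorem third (i j : Fin 3) (h : i ≠ j) : ∃ l, i ≠ l ∧ j ≠ l := by
  revert i j; decide

theorem others (i : Fin 3) : ∃ j l, i ≠ j ∧ i ≠ l ∧ j ≠ l := by
  revert i; decide

section asm
variable {a b : Fin 3 → V} {κ κ' : V → Fin 3} {r r' : V → V → Prop}

theorem L2 (S : Sy T)
    (A : Top T a κ r) (B : Top T b κ' r') (i j p q s : Fin 3)
    (pq : p ≠ q) (ps : p ≠ s) (qs : q ≠ s)
    (e1 : b p = a i) (e2 : b q = a j) (e3 : ∀ k, b s ≠ a k) : Good T a b := by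
  have ij : i ≠ j := by
    rintro rfl
    exact B.inj p q pq (e1.trans e2.symm)
  obtain ⟨l, il, jl⟩ := third i j ij
  have f := B.t3 p q s pq ps qs
  rw [e1, e2, A.t2 i j _ ij e3] at f
  rcases f with f | f
  · obtain ⟨h1, h2, h3⟩ := ov2 S A B j i l q p s ij.symm jl il pq.symm qs ps e2 e1 e3 f
    refine ⟨s, l, e3, h1, tw_of_cr S A _ _ e3 ⟨f ▸ il, fun x hx hs => ⟨h2 x hx hs, ?_⟩⟩⟩
    intro k1 k2
    rcases F3 i j l (κ x) ij il jl with h | h | h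
    · exact absurd (h.trans f.symm) k2
    · exact h3 x hx hs h
    · exact absurd h k1
  · obtain ⟨h1, h2, h3⟩ := ov2 S A B i j l p q s ij il jl pq ps qs e1 e2 e3 f
    refine ⟨s, l, e3, h1, tw_of_cr S A _ _ e3 ⟨f ▸ jl, fun x hx hs => ⟨h2 x hx hs, ?_⟩⟩⟩
    intro k1 k2
    rcases F3 i j l (κ x) ij il jl with h | h | h
    · exact h3 x hx hs h
    · exact absurd (h.trans f.symm) k2
    · exact absurd h k1

theorem L1' (S : Sy T)
    (A : Top T a κ r) (B : Top T b κ' r') (i p q s : Fin 3)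
    (pq : p ≠ q) (ps : p ≠ s) (qs : q ≠ s)
    (e1 : b p = a i) (e2 : ∀ k, b q ≠ a k) (e3 : ∀ k, b s ≠ a k)
    (ha : ∀ j, j ≠ i → ∀ k, a j ≠ b k) (ku : κ (b q) = i) : Good T a b := by
  have nb : ∀ x, (∀ k, x ≠ a k) → x ≠ b q → x ≠ b s → ∀ k, x ≠ b k := by
    intro x hx hq hs k
    rcases F3 p q s k pq ps qs with rfl | rfl | rfl
    · rw [e1]; exact hx i
    · exact hq
    · exact hs
  by_cases kv : κ (b s) = i
  · obtain ⟨j, l, ij, il, jl⟩ := others i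
    rcases ov1a S A B i j l p q s ij il jl pq ps qs e1 e2 e3 ku kv nb (ha _ ij.symm)
      (ha _ il.symm) with h | h
    · refine ⟨q, j, e2, ha _ ij.symm, tw_of_cr S A _ _ e2 ⟨ku ▸ ij, fun x hx hs =>
        ⟨(h x hx hs).1, ?_⟩⟩⟩
      intro k1 k2
      rcases F3 i j l (κ x) ij il jl with g | g | g
      · exact absurd (g.trans ku.symm) k2
      · exact absurd g k1
      · exact (h x hx hs).2 g
    · refine ⟨q, l, e2, ha _ il.symm, tw_of_cr S A _ _ e2 ⟨ku ▸ il, fun x hx hs =>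
        ⟨(h x hx hs).1, ?_⟩⟩⟩
      intro k1 k2
      rcases F3 i j l (κ x) ij il jl with g | g | g
      · exact absurd (g.trans ku.symm) k2
      · exact (h x hx hs).2 g
      · exact absurd g k1
  · have ij : i ≠ κ (b s) := Ne.symm kv
    obtain ⟨l, il, jl⟩ := third _ _ ij
    have h := ov1b S A B i _ l p q s ij il jl pq ps qs e1 e2 e3 ku rfl nb (ha _ ij.symm)
      (ha _ il.symm)
    refine ⟨q, _, e2, ha _ ij.symm, tw_of_cr S A _ _ e2 ⟨ku ▸ ij, fun x hx hs =>
        ⟨(h x hx hs).1, ?_⟩⟩⟩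
    intro k1 k2
    rcases F3 i _ l (κ x) ij il jl with g | g | g
    · exact absurd (g.trans ku.symm) k2
    · exact absurd g k1
    · exact (h x hx hs).2 g

theorem L1 (S : Sy T)
    (A : Top T a κ r) (B : Top T b κ' r') (i p q s : Fin 3)
    (pq : p ≠ q) (ps : p ≠ s) (qs : q ≠ s)
    (e1 : b p = a i) (e2 : ∀ k, b q ≠ a k) (e3 : ∀ k, b s ≠ a k) : Good T a b := by
  have ha : ∀ j, j ≠ i → ∀ k, a j ≠ b k := by
    intro j ji k
    rcases F3 p q s k pq ps qs with rfl | rfl | rfl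
    · rw [e1]; exact A.inj _ _ ji
    · exact (e2 j).symm
    · exact (e3 j).symm
  rcases ov1c S A B i p q s pq ps qs e1 e2 e3 ha with h | h
  · exact L1' S A B i p q s pq ps qs e1 e2 e3 ha h
  · exact L1' S A B i p s q ps pq qs.symm e1 e3 e2 ha h

theorem L0' (S : Sy T)
    (A : Top T a κ r) (B : Top T b κ' r') (p q s : Fin 3)
    (pq : p ≠ q) (ps : p ≠ s) (qs : q ≠ s) (e : ∀ m k, b m ≠ a k)
    (h1 : κ (b p) ≠ κ (b q)) (h2 : κ (b p) ≠ κ (b s)) (h3 : κ (b q) ≠ κ (b s))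
    (r1 : r (b p) (b q)) (r2 : r (b q) (b s)) (r3 : r (b s) (b p)) : Good T a b := by
  have H1 := ov0b S A B p q s pq ps qs e h1 h2 h3 r1 r2 r3
  have H2 := ov0b S A B s p q ps.symm qs.symm pq e h2.symm h3.symm h1 r3 r1 r2
  refine ⟨q, κ (b p), e q, fun k => (e k _).symm, tw_of_cr S A _ _ (e q) ⟨h1.symm, ?_⟩⟩
  intro x hx hq
  constructor
  · intro hk
    by_cases hp : x = b p
    · rw [hp]; exact r1
    · exact (H1 x hx hp hk).1
  · intro k1 k2
    by_cases hp : x = b s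
    · rw [hp]; exact r2
    · refine (H2 x hx hp ?_).2
      rcases F3 _ _ _ (κ x) h1 h2 h3 with g | g | g
      · exact absurd g k1
      · exact absurd g k2
      · exact g

theorem L0 (S : Sy T)
    (A : Top T a κ r) (B : Top T b κ' r') (e : ∀ m k, b m ≠ a k) : Good T a b := by
  have d01 : (0 : Fin 3) ≠ 1 := by decide
  have d02 : (0 : Fin 3) ≠ 2 := by decide
  have d12 : (1 : Fin 3) ≠ 2 := by decide
  have f := B.t3 0 1 2 d01 d02 d12
  by_cases h1 : κ (b 0) = κ (b 1)
  · by_cases h2 : κ (b 0) = κ (b 2)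
    · exact absurd f (A.c0 _ _ _ (e 0) (e 1) (e 2) h1 (h1 ▸ h2))
    · exact (ov0a S A B 0 1 2 d01 d02 d12 e h1 h2).elim
  by_cases h2 : κ (b 0) = κ (b 2)
  · exact (ov0a S A B 0 2 1 d02 d01 d12.symm e h2 h1).elim
  by_cases h3 : κ (b 1) = κ (b 2)
  · exact (ov0a S A B 1 2 0 d12 d01.symm d02.symm e h3 (Ne.symm h1)).elim
  rw [A.c2 _ _ _ (e 0) (e 1) (e 2) h1 h2 h3] at f
  rcases f with ⟨r1, r2, r3⟩ | ⟨r1, r2, r3⟩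
  · exact L0' S A B 0 1 2 d01 d02 d12 e h1 h2 h3 r1 r2 r3
  · exact L0' S A B 0 2 1 d02 d01 d12.symm e h2 h1 (Ne.symm h3) r3 r2 r1

theorem good (S : Sy T)
    (A : Top T a κ r) (B : Top T b κ' r') (h : ∃ m, ∀ k, b m ≠ a k) : Good T a b := by
  have d01 : (0 : Fin 3) ≠ 1 := by decide
  have d02 : (0 : Fin 3) ≠ 2 := by decide
  have d12 : (1 : Fin 3) ≠ 2 := by decide
  by_cases h0 : ∀ k, b 0 ≠ a k <;> by_cases h1 : ∀ k, b 1 ≠ a k <;>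
    by_cases h2 : ∀ k, b 2 ≠ a k
  · refine L0 S A B ?_
    intro m
    rcases F3 0 1 2 m d01 d02 d12 with rfl | rfl | rfl <;> assumption
  · push Not at h2
    obtain ⟨i, h2⟩ := h2
    exact L1 S A B i 2 0 1 d02.symm d12.symm d01 h2 h0 h1
  · push Not at h1
    obtain ⟨i, h1⟩ := h1
    exact L1 S A B i 1 0 2 d01.symm d12 d02 h1 h0 h2
  · push Not at h1 h2
    obtain ⟨i, h1⟩ := h1
    obtain ⟨j, h2⟩ := h2
    exact L2 S A B i j 1 2 0 d12 d01.symm d02.symm h1 h2 h0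
  · push Not at h0
    obtain ⟨i, h0⟩ := h0
    exact L1 S A B i 0 1 2 d01 d02 d12 h0 h1 h2
  · push Not at h0 h2
    obtain ⟨i, h0⟩ := h0
    obtain ⟨j, h2⟩ := h2
    exact L2 S A B i j 0 2 1 d02 d01 d12.symm h0 h2 h1
  · push Not at h0 h1
    obtain ⟨i, h0⟩ := h0
    obtain ⟨j, h1⟩ := h1
    exact L2 S A B i j 0 1 2 d01 d02 d12 h0 h1 h2
  · exfalso
    obtain ⟨m, hm⟩ := h
    rcases F3 0 1 2 m d01 d02 d12 with rfl | rfl | rfl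
    · exact h0 hm
    · exact h1 hm
    · exact h2 hm

theorem tw_aut [DecidableEq V] (S : Sy T) (u v : V) (h : Tw T u v) (x y z : V) :
    T (Equiv.swap u v x) (Equiv.swap u v y) (Equiv.swap u v z) ↔ T x y z := by
  have ne := S.ne
  have s1 := S.swap
  have s2 := S.rot
  unfold Tw at h
  simp only [Equiv.swap_apply_def]
  grind

theorem Top.map {W : Type} {T' : W → W → W → Prop} (B : Top T b κ' r') (φ : V ≃ W)
    (hφ : ∀ x y z, T' (φ x) (φ y) (φ z) ↔ T x y z) :
    Top T' (fun i => φ (b i)) (fun x => κ' (φ.symm x)) (fun x y => r' (φ.symm x) (φ.symm y)) := by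
  have o : ∀ x, (∀ l, x ≠ φ (b l)) → ∀ l, φ.symm x ≠ b l := by
    intro x h l e
    exact h l (by rw [← e]; simp)
  have hT : ∀ x y z, T' x y z ↔ T (φ.symm x) (φ.symm y) (φ.symm z) := by
    intro x y z
    rw [← hφ (φ.symm x)]; simp
  constructor
  · intro i j h e
    exact B.inj i j h (φ.injective e)
  · intro i j l h1 h2 h3
    rw [hφ]; exact B.t3 i j l h1 h2 h3
  · intro i j x h hx
    rw [hT]; simpa using B.t2 i j _ h (o x hx)
  · intro i x y hx hy xy
    rw [hT]; simpa using B.t1s i _ _ (o x hx) (o y hy) (by simpa using xy)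
  · intro i x y hx hy
    rw [hT]; simpa using B.t1d i _ _ (o x hx) (o y hy)
  · intro i x y hx hy
    rw [hT]; simpa using B.t1m i _ _ (o x hx) (o y hy)
  · intro x y hx hy
    exact B.rel _ _ (o x hx) (o y hy)
  · intro x y z hx hy hz
    rw [hT]; exact B.c0 _ _ _ (o x hx) (o y hy) (o z hz)
  · intro x y z hx hy hz xy
    rw [hT]; exact B.c1 _ _ _ (o x hx) (o y hy) (o z hz) (by simpa using xy)
  · intro x y z hx hy hz
    rw [hT]; exact B.c2 _ _ _ (o x hx) (o y hy) (o z hz)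

open Classical in
theorem align_aux (S : Sy T) (A : Top T a κ r) (N : ℕ) : ∀ (b : Fin 3 → V) (κ' : V → Fin 3)
    (r' : V → V → Prop), Top T b κ' r' → 
    (Finset.univ.filter (fun m => ∀ k, b m ≠ a k)).card ≤ N →
    ∃ φ : V ≃ V, (∀ x y z, T (φ x) (φ y) (φ z) ↔ T x y z) ∧ ∀ m, ∃ k, φ (b m) = a k := by
  induction N with
  | zero =>
    intro b κ' r' B h
    refine ⟨Equiv.refl _, fun _ _ _ => Iff.rfl, ?_⟩
    intro m
    by_contra hc
    push Not at hc
    have : m ∈ (Finset.univ.filter (fun m => ∀ k, b m ≠ a k)) := by simpa using hc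
    rw [Finset.card_eq_zero.mp (Nat.le_zero.mp h)] at this
    simp at this
  | succ N ih =>
    intro b κ' r' B h
    by_cases h' : ∃ m, ∀ k, b m ≠ a k
    · obtain ⟨m, l, hm, hl, tw⟩ := good S A B h'
      have au := tw_aut S _ _ tw
      obtain ⟨φ, h1, h2⟩ := ih _ _ _ (B.map (Equiv.swap (b m) (a l)) au) (by
        refine Nat.le_of_lt_succ (lt_of_lt_of_le (Finset.card_lt_card ?_) h)
        rw [Finset.ssubset_iff_of_subset]
        · refine ⟨m, by simpa using hm, ?_⟩
          simp only [Finset.mem_filter, Finset.mem_univ, true_and, Equiv.swap_apply_left]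
          push Not
          exact ⟨l, rfl⟩
        · intro x
          simp only [Finset.mem_filter, Finset.mem_univ, true_and]
          intro hx
          by_cases e : b x = b m
          · rw [e]; exact hm
          · rwa [Equiv.swap_apply_of_ne_of_ne e (hl x).symm] at hx)
      refine ⟨(Equiv.swap (b m) (a l)).trans φ, ?_, h2⟩
      intro x y z
      simp only [Equiv.trans_apply]
      rw [h1, au]
    · push Not at h'
      exact ⟨Equiv.refl _, fun _ _ _ => Iff.rfl, h'⟩

theorem align (S : Sy T) (A : Top T a κ r) (B : Top T b κ' r') :
    ∃ φ : V ≃ V, (∀ x y z, T (φ x) (φ y) (φ z) ↔ T x y z) ∧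
      ∃ π : Equiv.Perm (Fin 3), ∀ m, φ (b m) = a (π m) := by
  obtain ⟨φ, h1, h2⟩ := align_aux S A _ b κ' r' B le_rfl
  choose f hf using h2
  have inj : Function.Injective f := by
    intro x y e
    by_contra hc
    refine B.inj x y hc (φ.injective ?_)
    rw [hf, hf, e]
  refine ⟨φ, h1, Equiv.ofBijective f (Finite.injective_iff_bijective.mp inj), hf⟩
end asm
end top
end TuranX

namespace TuranX

theorem sy (F : Fr) : Sy F.T :=
  ⟨fun _ _ _ => ⟨T_swap, T_swap⟩, fun _ _ _ => ⟨T_rot, fun h => T_rot (T_rot h)⟩, fun _ _ _ h => h.1⟩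

theorem out_inl {A : Type} {x : A ⊕ Fin 3} (h : ∀ l, x ≠ Sum.inr l) : ∃ y, x = Sum.inl y := by
  rcases x with y | l
  · exact ⟨y, rfl⟩
  · exact absurd rfl (h l)

def core' (k1 k2 k3 : Fin 3) (r12 r21 r13 r31 r23 r32 : Bool) : Prop :=
  ¬ (k1 = k2 ∧ k2 = k3) ∧ ¬ (r12 = true ∧ r13 = true) ∧ ¬ (r21 = true ∧ r23 = true) ∧
    ¬ (r31 = true ∧ r32 = true)

theorem T_iff (F : Fr) (x y z : F.V) : F.T x y z ↔ x ≠ y ∧ x ≠ z ∧ y ≠ z ∧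
    core' (F.κ x) (F.κ y) (F.κ z) (F.r x y) (F.r y x) (F.r x z) (F.r z x) (F.r y z) (F.r z y) := by
  unfold Fr.T Fr.cr core core'
  simp only [Bool.and_eq_true, Bool.not_eq_true', Bool.and_eq_false_iff,
    decide_eq_false_iff_not]
  grind

theorem ext_top {F : Fr} (h : Ok F) (ρ : Row) :
    Top (ext F ρ).T (Sum.inr : Fin 3 → F.V ⊕ Fin 3) (ext F ρ).κ (fun x y => (ext F ρ).r x y = true) := by
  constructor
  · intro i j ij e
    exact ij (Sum.inr.inj e)
  · intro i j l ij il jl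
    refine ⟨fun e => ij (Sum.inr.inj e), fun e => il (Sum.inr.inj e), fun e => jl (Sum.inr.inj e), ?_⟩
    simp only [Fr.cr, ext, Sum.elim_inl, Sum.elim_inr]
    revert ρ i j l
    decide
  · intro i j x ij hx
    obtain ⟨x, rfl⟩ := out_inl hx
    have e1 : (Sum.inr i : F.V ⊕ Fin 3) ≠ Sum.inr j := fun e => ij (Sum.inr.inj e)
    have : ∀ ρ i j k, i ≠ j → (core' (rc ρ i) (rc ρ j) k (rg ρ i j) (rg ρ j i)
      (decide (k ≠ i ∧ k ≠ rc ρ i)) (decide (k = i)) (decide (k ≠ j ∧ k ≠ rc ρ j))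
      (decide (k = j)) ↔ (k = i ∨ k = j)) := by unfold core'; decide
    rw [T_iff]
    have := this ρ i j (F.κ x) ij
    simp only [ext, Sum.elim_inl, Sum.elim_inr]
    rw [this]
    simp [ij]
  · intro i x y hx hy xy hk
    obtain ⟨x, rfl⟩ := out_inl hx
    obtain ⟨y, rfl⟩ := out_inl hy
    rw [T_iff]
    have xy' : x ≠ y := fun e => xy (e ▸ rfl)
    have h1 := rc_ne ρ i
    have h2 := h.same x y hk
    have h3 := h.same y x hk.symm
    simp only [ext, Sum.elim_inl, Sum.elim_inr] at hk ⊢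
    unfold core'
    simp [h2, h3, hk, xy']
    grind
  · intro i x y hx hy xy hk hk'
    obtain ⟨x, rfl⟩ := out_inl hx
    obtain ⟨y, rfl⟩ := out_inl hy
    rw [T_iff]
    have h1 := rc_ne ρ i
    have h4 := F3 i (rc ρ i) (F.κ x) (F.κ y)
    simp only [ext, Sum.elim_inl, Sum.elim_inr] at xy hk hk' ⊢
    have xy' : x ≠ y := fun e => xy (e ▸ rfl)
    unfold core'
    simp [hk, hk', xy']
    grind
  · intro i x y hx hy hk hk'
    obtain ⟨x, rfl⟩ := out_inl hx
    obtain ⟨y, rfl⟩ := out_inl hy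
    rw [T_iff]
    have h1 := rc_ne ρ i
    have h2 := h.diff x y
    simp only [ext, Sum.elim_inl, Sum.elim_inr] at hk hk' ⊢
    have xy' : x ≠ y := fun e => hk' (e ▸ hk)
    unfold core'
    simp [hk, hk', xy']
    grind
  · intro x y hx hy xy
    have := (ext_ok h ρ).diff x y xy
    grind
  · intro x y z _ _ _ h1 h2
    rw [T_iff]
    unfold core'
    grind
  · intro x y z hx hy hz xy h1 h2
    have a1 := (ext_ok h ρ).same x y h1
    have a2 := (ext_ok h ρ).same y x h1.symm
    rw [T_iff]
    unfold core'
    have : x ≠ z := fun e => h2 (e ▸ rfl)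
    have : y ≠ z := fun e => h2 (e ▸ h1)
    grind
  · intro x y z hx hy hz h1 h2 h3
    have a1 := (ext_ok h ρ).diff x y h1
    have a2 := (ext_ok h ρ).diff x z h2
    have a3 := (ext_ok h ρ).diff y z h3
    rw [T_iff]
    unfold core'
    have : x ≠ y := fun e => h1 (e ▸ rfl)
    have : x ≠ z := fun e => h2 (e ▸ rfl)
    have : y ≠ z := fun e => h3 (e ▸ rfl)
    grind

theorem restrict {A B : Type} (e : A ⊕ Fin 3 ≃ B ⊕ Fin 3) (π : Equiv.Perm (Fin 3))
    (h : ∀ i, e (Sum.inr i) = Sum.inr (π i)) : ∃ s : A ≃ B, ∀ x, e (Sum.inl x) = Sum.inl (s x) := by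
  have h1 : ∀ x, ∃ y, e (Sum.inl x) = Sum.inl y := by
    intro x
    apply out_inl
    intro l hl
    have := h (π.symm l)
    rw [Equiv.apply_symm_apply, ← hl] at this
    exact absurd (e.injective this) (by simp)
  have h2 : ∀ y, ∃ x, e.symm (Sum.inl y) = Sum.inl x := by
    intro x
    apply out_inl
    intro l hl
    rw [Equiv.symm_apply_eq, h] at hl
    simp at hl
  choose f hf using h1
  choose g hg using h2
  refine ⟨⟨f, g, ?_, ?_⟩, hf⟩
  · intro x
    have := hg (f x)
    rw [← hf, Equiv.symm_apply_apply] at this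
    exact (Sum.inl.inj this).symm
  · intro x
    have := hf (g x)
    rw [← hg, Equiv.apply_symm_apply] at this
    exact (Sum.inl.inj this).symm

theorem step1 {F G : Fr} (hF : Ok F) (hG : Ok G) (ρ ρ' : Row) (σ : (ext F ρ).V ≃ (ext G ρ').V)
    (hσ : ∀ x y z, (ext G ρ').T (σ x) (σ y) (σ z) ↔ (ext F ρ).T x y z) :
    ∃ s π, FIso F G s π := by
  have A := ext_top hF ρ
  have B := ext_top hG ρ'
  have B' := B.map (T' := (ext F ρ).T) σ.symm (by intro x y z; rw [← hσ]; simp)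
  obtain ⟨φ, h1, π, h2⟩ := align (sy _) A B'
  have key : ∃ e : F.V ⊕ Fin 3 ≃ G.V ⊕ Fin 3,
    (∀ x y z, (ext G ρ').T (e x) (e y) (e z) ↔ (ext F ρ).T x y z) ∧
     ∀ i, e (Sum.inr i) = Sum.inr (π.symm i) := by
    refine ⟨φ.symm.trans σ, ?_, ?_⟩
    · intro x y z
      simp only [Equiv.trans_apply]
      rw [hσ, ← h1]
      simp
    · intro i
      have := h2 (π.symm i)
      rw [Equiv.apply_symm_apply] at this
      simp only [Equiv.trans_apply]
      rw [← this]
      simp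
  obtain ⟨e, he, hi⟩ := key
  obtain ⟨s, hs⟩ := restrict e π.symm hi
  have K : ∀ x, G.κ (s x) = π.symm (F.κ x) := by
    intro x
    have key : ∀ i j, i ≠ j → ((F.κ x = i ∨ F.κ x = j) ↔ (G.κ (s x) = π.symm i ∨ G.κ (s x) = π.symm j)) := by
      intro i j ij
      have a1 := A.t2 i j (Sum.inl x) ij (by simp)
      have a2 := B.t2 (π.symm i) (π.symm j) (Sum.inl (s x)) (by simpa using ij) (by simp)
      rw [← he, hi, hi, hs] at a1
      exact a1.symm.trans a2
    obtain ⟨j, l, h1, h2, h3⟩ := others (F.κ x)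
    have e1 := (key _ j h1).1 (Or.inl rfl)
    have e2 := (key _ l h2).1 (Or.inl rfl)
    have : π.symm j ≠ π.symm l := by simpa using h3
    grind
  refine ⟨s, π.symm, K, ?_⟩
  intro x y
  by_cases hk : F.κ x = F.κ y
  · rw [hF.same x y hk, hG.same]
    rw [K, K, hk]
  · have a1 := A.t1m (F.κ y) (Sum.inl y) (Sum.inl x) (by simp) (by simp) rfl hk
    have a2 := B.t1m (π.symm (F.κ y)) (Sum.inl (s y)) (Sum.inl (s x)) (by simp) (by simp) (K y)
      (by
        change G.κ (s x) ≠ _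
        rw [K]; simpa using hk)
    rw [← he, hi, hs, hs] at a1
    have a3 := a2.symm.trans a1
    rw [Bool.eq_iff_iff]
    exact a3
end TuranX

namespace TuranX
def okc (m : Bool) (c : Ch) : Bool := !m || (c == (0, true) || c == (1, true) || c == (1, false))

def srch (F G : Fr) (π : Fin 3 → Fin 3) (ys : List G.V) : List F.V → List (F.V × G.V) → Bool
  | [], _ => true
  | x :: xs, acc => ys.any fun y => decide (G.κ y = π (F.κ x)) && (acc.all fun q =>
      (decide (q.2 = y) == decide (q.1 = x)) && (G.r q.2 y == F.r q.1 x) && (G.r y q.2 == F.r x q.1))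
      && srch F G π ys xs ((x, y) :: acc)

theorem srch_of {F G : Fr} {σ : F.V ≃ G.V} {π : Equiv.Perm (Fin 3)} (h : FIso F G σ π)
    (ys : List G.V) (hy : ∀ y, y ∈ ys) (xs : List F.V) : ∀ acc : List (F.V × G.V),
    (∀ q ∈ acc, q.2 = σ q.1) → srch F G π ys xs acc = true := by
  induction xs with
  | nil => intro acc _; rfl
  | cons x xs ih =>
    intro acc hacc
    simp only [srch, List.any_eq_true, Bool.and_eq_true, List.all_eq_true, decide_eq_true_eq]
    refine ⟨σ x, hy _, ⟨h.κ x, ?_⟩, ih _ ?_⟩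
    · intro q hq
      rw [hacc q hq, h.r, h.r]
      simp
    · intro q hq
      rcases List.mem_cons.1 hq with rfl | hq
      · rfl
      · exact hacc q hq

def bv (m : Bool) : List (base m).V :=
  match m with
  | true => [()]
  | false => [true, false]

theorem bv_mem (m : Bool) (x : (base m).V) : x ∈ bv m := by
  cases m
  · revert x; decide
  · revert x; decide

def ev (m : Bool) : List ((base m).V ⊕ Fin 3) := (bv m).map Sum.inl ++ [Sum.inr 0, Sum.inr 1, Sum.inr 2]

theorem ev_mem (m : Bool) (x : (base m).V ⊕ Fin 3) : x ∈ ev m := by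
  unfold ev
  rcases x with x | i
  · simp [bv_mem]
  · have : i = 0 ∨ i = 1 ∨ i = 2 := F3 0 1 2 i (by decide) (by decide) (by decide)
    simp [this]

theorem base_dec : ∀ m : Bool, ∀ c c' : Ch, okc m c = true → okc m c' = true → ∀ p0 p1 p2 : Fin 3,
    p0 ≠ p1 → p0 ≠ p2 → p1 ≠ p2 →
    srch (bf m [c]) (bf m [c']) ![p0, p1, p2] (ev m) (ev m) [] = true →
    c = c' ∧ p0 = 0 ∧ p1 = 1 ∧ p2 = 2 := by decide +kernel

theorem base_inj {m : Bool} {c c' : Ch} (hc : okc m c = true) (hc' : okc m c' = true)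
    {σ : (bf m [c]).V ≃ (bf m [c']).V} {π : Equiv.Perm (Fin 3)} (h : FIso (bf m [c]) (bf m [c']) σ π) :
    c = c' ∧ π = 1 := by
  have h1 := srch_of h (ev m) (ev_mem m) (ev m) [] (by simp)
  have e : (π : Fin 3 → Fin 3) = ![π 0, π 1, π 2] := by
    funext i
    fin_cases i <;> rfl
  rw [e] at h1
  obtain ⟨a, b, c, d⟩ := base_dec m c c' hc hc' (π 0) (π 1) (π 2) (by simp) (by simp) (by simp) h1
  refine ⟨a, ?_⟩
  ext i
  rcases F3 0 1 2 i (by decide) (by decide) (by decide) with rfl | rfl | rfl <;> simp [*]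
end TuranX

namespace TuranX

structure RL (F : Fr) (b : Fin 3 → F.V) : Prop where
  inj : ∀ i j, b i = b j → i = j
  ne : ∀ i, F.κ (b i) ≠ i
  out : ∀ i x, (∀ k, x ≠ b k) → F.κ x ≠ F.κ (b i) → (F.r x (b i) = true ↔ F.κ x = i)
  int : ∀ i j, F.κ (b i) ≠ F.κ (b j) → (F.κ (b i) = j ↔ F.κ (b j) ≠ i) →
    (F.r (b i) (b j) = true ↔ F.κ (b i) = j)

theorem ext_rl (F : Fr) (ρ : Row) : RL (ext F ρ) (Sum.inr : Fin 3 → F.V ⊕ Fin 3) := by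
  constructor
  · intro i j e
    exact Sum.inr.inj e
  · exact rc_ne ρ
  · intro i x hx hk
    obtain ⟨x, rfl⟩ := out_inl hx
    simp
  · intro i j h1 h2
    have := rg_int ρ i j h1 h2
    change (rg ρ i j = true ↔ rc ρ i = j)
    simp [this]

theorem RL.pull {F G : Fr} {σ : F.V ≃ G.V} {π : Equiv.Perm (Fin 3)} (h : FIso F G σ π)
    {b : Fin 3 → G.V} (B : RL G b) : RL F (fun i => σ.symm (b (π i))) := by
  have hk : ∀ x, F.κ (σ.symm x) = π.symm (G.κ x) := by
    intro x
    have := h.κ (σ.symm x)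
    rw [Equiv.apply_symm_apply] at this
    rw [this]; simp
  have hr : ∀ x y, F.r (σ.symm x) (σ.symm y) = G.r x y := by
    intro x y
    rw [← h.r]; simp
  constructor
  · intro i j e
    exact π.injective (B.inj _ _ (σ.symm.injective e))
  · intro i
    simp only [hk]
    intro e
    rw [Equiv.symm_apply_eq] at e
    exact B.ne _ e
  · intro i x hx hkx
    obtain ⟨y, rfl⟩ := σ.symm.surjective x
    simp only [hk] at hkx ⊢
    rw [hr, B.out (π i) y _ (by simpa using hkx), Equiv.symm_apply_eq]
    intro k e
    exact hx (π.symm k) (by simp [e])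
  · intro i j h1 h2
    simp only [hk] at h1 h2 ⊢
    rw [hr, B.int _ _ (by simpa using h1) ?_, Equiv.symm_apply_eq]
    rw [Equiv.symm_apply_eq] at h2
    rw [h2, Ne, Ne, Equiv.symm_apply_eq]

section
variable {F : Fr} {b b' : Fin 3 → F.V}

theorem rl_a (h : Ok F) (B : RL F b) (B' : RL F b') (i : Fin 3) (h1 : ∀ k, b i ≠ b' k)
    (h2 : ∀ k, b' i ≠ b k) : F.κ (b i) = F.κ (b' i) := by
  by_contra hc
  have a1 := B.out i (b' i) h2 (Ne.symm hc)
  have a2 := B'.out i (b i) h1 hc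
  have a3 := h.diff _ _ hc
  have a4 := B.ne i
  have a5 := B'.ne i
  clear h1 h2
  grind

theorem rl_b (h : Ok F) (B : RL F b) (B' : RL F b')
    (H1 : ∀ c, ∃ x, (∀ k, x ≠ b k) ∧ F.κ x = c) (H2 : ∀ c x, ∃ y, y ≠ x ∧ F.κ y = c)
    (i m : Fin 3) (e : b i = b' m) : i = m := by
  by_contra im
  obtain ⟨l, il, ml⟩ := third i m im
  have n1 := B.ne i
  have n2 := B'.ne m
  have k1 : F.κ (b i) = l := by
    have := F3 i m l (F.κ (b i)) im il ml
    grind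
  have O : ∀ x, (∀ k, x ≠ b k) → F.κ x ≠ l → ∃ k, x = b' k := by
    intro x hx hk
    by_contra hc
    push Not at hc
    have a1 := B.out i x hx (k1 ▸ hk)
    have a2 := B'.out m x hc (by rw [← e, k1]; exact hk)
    have := F3 i m l (F.κ x) im il ml
    rw [← e] at a2
    clear hx hc
    grind
  obtain ⟨x, hx, kx⟩ := H1 i
  obtain ⟨y, hy, ky⟩ := H1 m
  obtain ⟨k, hk⟩ := O x hx (kx ▸ il)
  obtain ⟨k', hk'⟩ := O y hy (ky ▸ ml)
  have xl : x = b' l := by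
    rcases F3 i m l k im il ml with rfl | rfl | rfl
    · subst hk; exact absurd kx (B'.ne _)
    · exact absurd (hk.trans e.symm) (hx i)
    · exact hk
  have yi : y = b' i := by
    rcases F3 i m l k' im il ml with rfl | rfl | rfl
    · exact hk'
    · exact absurd (hk'.trans e.symm) (hy i)
    · rw [hk', ← xl, kx] at ky; exact absurd ky im
  have bl : ∀ k, b l ≠ b' k := by
    intro k hk
    rcases F3 i m l k im il ml with rfl | rfl | rfl
    · rw [← yi] at hk; exact hy l hk.symm
    · rw [← e] at hk; exact il (B.inj _ _ hk).symm
    · rw [← xl] at hk; exact hx _ hk.symm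
  have kl := rl_a h B B' l bl (by rw [← xl]; exact hx)
  rw [← xl, kx] at kl
  obtain ⟨z, zy, kz⟩ := H2 m y
  by_cases hz : ∀ k, z ≠ b k
  · obtain ⟨k, hk⟩ := O z hz (kz ▸ ml)
    rcases F3 i m l k im il ml with rfl | rfl | rfl
    · exact zy (hk.trans yi.symm)
    · exact hz i (hk.trans e.symm)
    · rw [hk, ← xl, kx] at kz; exact im kz
  · push Not at hz
    obtain ⟨k, hk⟩ := hz
    rcases F3 i m l k im il ml with rfl | rfl | rfl
    · rw [hk, k1] at kz; exact ml kz.symm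
    · rw [hk] at kz; exact B.ne _ kz
    · rw [hk, kl] at kz; exact im kz

theorem rl_c (h : Ok F) (B : RL F b) (B' : RL F b') (D : ∀ i m, b i = b' m → i = m) (i : Fin 3)
    (hi : b i ≠ b' i) : F.κ (b i) = F.κ (b' i) ∧ ∀ x, x ≠ b i → x ≠ b' i →
      F.r x (b i) = F.r x (b' i) := by
  have o1 : ∀ k, b i ≠ b' k := fun k e => hi (by rw [e, D _ _ e])
  have o2 : ∀ k, b' i ≠ b k := fun k e => by
    have := D _ _ e.symm
    subst this
    exact hi e.symm
  have kk := rl_a h B B' i o1 o2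
  refine ⟨kk, ?_⟩
  intro x x1 x2
  by_cases kx : F.κ x = F.κ (b i)
  · rw [h.same _ _ kx, h.same _ _ (kx.trans kk)]
  by_cases hx : ∀ k, x ≠ b k
  · by_cases hx' : ∀ k, x ≠ b' k
    · have a1 := B.out i x hx kx
      have a2 := B'.out i x hx' (kk ▸ kx)
      rw [Bool.eq_iff_iff, a1, a2]
    · push Not at hx'
      obtain ⟨m, rfl⟩ := hx'
      have a1 := B.out i _ hx kx
      have a2 := B'.int m i (kk ▸ kx)
      have a3 := B'.out m (b i) o1 (Ne.symm kx)
      have a4 := h.diff _ _ kx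
      have a5 := B'.ne m
      have a6 := B'.ne i
      have a7 := F3 (F.κ (b' m)) (F.κ (b' i)) m i
      have a8 := F3 (F.κ (b' m)) (F.κ (b' i)) i m
      clear hx o1 o2 D
      grind
  · push Not at hx
    obtain ⟨m, rfl⟩ := hx
    have b2 := B.int m i kx
    have b3 := B.out m (b' i) o2 (by rw [← kk]; exact Ne.symm kx)
    have b4 := h.diff _ _ kx
    have b4' := h.diff (b m) (b' i) (kk ▸ kx)
    have a5 := B.ne m
    have a6 := B.ne i
    have a7 := F3 (F.κ (b m)) (F.κ (b i)) m i
    have a8 := F3 (F.κ (b m)) (F.κ (b i)) i m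
    by_cases hx' : ∀ k, b m ≠ b' k
    · have a2 := B'.out i _ hx' (kk ▸ kx)
      clear hx' o1 o2 D
      grind
    · push Not at hx'
      obtain ⟨m', e⟩ := hx'
      have em := D _ _ e
      subst em
      have a1 := B'.int m i (by rw [← e, ← kk]; exact kx)
      have a3 := B'.out m (b i) o1 (by rw [← e]; exact Ne.symm kx)
      clear o1 o2 D
      grind

theorem fiso_trans {F G H : Fr} {σ : F.V ≃ G.V} {τ : G.V ≃ H.V} {π ρ : Equiv.Perm (Fin 3)}
    (h : FIso F G σ π) (g : FIso G H τ ρ) : FIso F H (σ.trans τ) (π.trans ρ) :=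
  ⟨fun x => by simp [g.κ, h.κ], fun x y => by simp [g.r, h.r]⟩

theorem fiso_symm {F G : Fr} {σ : F.V ≃ G.V} {π : Equiv.Perm (Fin 3)}
    (h : FIso F G σ π) : FIso G F σ.symm π.symm := by
  refine ⟨fun x => ?_, fun x y => ?_⟩
  · rw [Equiv.eq_symm_apply, ← h.κ]; simp
  · rw [← h.r]; simp

theorem swap_fiso (h : Ok F) (u v : F.V)
    (hh : u ≠ v → F.κ u = F.κ v ∧ ∀ x, x ≠ u → x ≠ v → F.r x u = F.r x v) :
    FIso F F (Equiv.swap u v) (Equiv.refl _) := by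
  by_cases uv : u = v
  · subst uv
    rw [Equiv.swap_self]
    exact ⟨fun _ => rfl, fun _ _ => rfl⟩
  obtain ⟨h1, h2⟩ := hh uv
  have h3 : ∀ x, x ≠ u → x ≠ v → F.r u x = F.r v x := by
    intro x xu xv
    by_cases e : F.κ x = F.κ u
    · rw [h.same _ _ e.symm, h.same _ _ (h1.symm.trans e.symm)]
    · rw [h.diff _ _ (Ne.symm e), h.diff v x (by rw [← h1]; exact Ne.symm e), h2 x xu xv]
  have s := h.same
  constructor
  · intro x
    simp only [Equiv.swap_apply_def, Equiv.refl_apply]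
    grind
  · intro x y
    simp only [Equiv.swap_apply_def]
    grind

theorem align2 (h : Ok F) (B : RL F b) (B' : RL F b') (D : ∀ i m, b i = b' m → i = m) :
    ∃ φ : F.V ≃ F.V, FIso F F φ (Equiv.refl _) ∧ ∀ i, φ (b' i) = b i := by
  have f : ∀ i, FIso F F (Equiv.swap (b i) (b' i)) (Equiv.refl _) := fun i =>
    swap_fiso h _ _ (rl_c h B B' D i)
  refine ⟨((Equiv.swap (b 0) (b' 0)).trans (Equiv.swap (b 1) (b' 1))).trans
    (Equiv.swap (b 2) (b' 2)), fiso_trans (fiso_trans (f 0) (f 1)) (f 2), ?_⟩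
  have i1 := B.inj
  have i2 := B'.inj
  have k : ∀ i j, i ≠ j → Equiv.swap (b j) (b' j) (b i) = b i := by
    intro i j ij
    exact Equiv.swap_apply_of_ne_of_ne (fun e => ij (i1 _ _ e)) (fun e => ij (D _ _ e))
  have k' : ∀ i j, i ≠ j → Equiv.swap (b j) (b' j) (b' i) = b' i := by
    intro i j ij
    exact Equiv.swap_apply_of_ne_of_ne (fun e => ij (D _ _ e.symm).symm) (fun e => ij (i2 _ _ e))
  intro i
  simp only [Equiv.trans_apply]
  rcases F3 0 1 2 i (by decide) (by decide) (by decide) with rfl | rfl | rfl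
  · rw [Equiv.swap_apply_right, k _ _ (by decide), k _ _ (by decide)]
  · rw [k' _ _ (by decide), Equiv.swap_apply_right, k _ _ (by decide)]
  · rw [k' _ _ (by decide), k' _ _ (by decide), Equiv.swap_apply_right]
end

theorem step2 {F G : Fr} (hF : Ok F) (ρ ρ' : Row)
    (H1 : ∀ c, ∃ x, F.κ x = c)
    (H2 : ∀ c (x : (ext F ρ).V), ∃ y, y ≠ x ∧ (ext F ρ).κ y = c)
    {σ : (ext F ρ).V ≃ (ext G ρ').V} {π : Equiv.Perm (Fin 3)}
    (h : FIso (ext F ρ) (ext G ρ') σ π) :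
    (∃ s, FIso F G s π) ∧ (∀ i, rc ρ' (π i) = π (rc ρ i)) ∧
      ∀ i j, rg ρ' (π i) (π j) = rg ρ i j := by
  have B := ext_rl F ρ
  have B' := (ext_rl G ρ').pull h
  have D := rl_b (ext_ok hF ρ) B B' (by
    intro c
    obtain ⟨x, hx⟩ := H1 c
    exact ⟨Sum.inl x, by simp, hx⟩) H2
  obtain ⟨φ, h1, h2⟩ := align2 (ext_ok hF ρ) B B' D
  have h3 := fiso_trans (fiso_symm h1) h
  have h4 : ∀ i, (φ.symm.trans σ) (Sum.inr i) = Sum.inr (π i) := by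
    intro i
    simp only [Equiv.trans_apply]
    rw [← h2 i]
    simp
  obtain ⟨s, hs⟩ := restrict _ π h4
  refine ⟨⟨s, ?_, ?_⟩, ?_, ?_⟩
  · intro x
    have := h3.κ (Sum.inl x)
    rw [hs] at this
    exact this
  · intro x y
    have := h3.r (Sum.inl x) (Sum.inl y)
    rw [hs, hs] at this
    exact this
  · intro i
    have := h3.κ (Sum.inr i)
    rw [h4] at this
    exact this
  · intro i j
    have := h3.r (Sum.inr i) (Sum.inr j)
    rw [h4, h4] at this
    exact this
end TuranX

namespace TuranX

def cnt (F : Fr) (c : Fin 3) : ℕ := (Finset.univ.filter (fun x => F.κ x = c)).card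

theorem cnt_ext (F : Fr) (ρ : Row) (c : Fin 3) :
    cnt (ext F ρ) c = cnt F c + (Finset.univ.filter (fun i => rc ρ i = c)).card := by
  unfold cnt
  simp only [Finset.card_filter]
  exact Fintype.sum_sum_type _

theorem cnt_bf1 (w : List Ch) (c : Fin 3) :
    cnt (bf true w) c = w.length + if c = bl true w then 1 else 0 := by
  induction w with
  | nil => revert c; decide
  | cons d w ih =>
    have D : ∀ (l : Fin 3) (d : Ch) (c : Fin 3),
      (if c = l then 1 else 0) + (Finset.univ.filter (fun i => rc (chRow true l d) i = c)).card
      = 1 + if c = chL true l d then 1 else 0 := by decide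
    have := D (bl true w) d c
    change cnt (ext (bf true w) _) c = _
    rw [cnt_ext, ih, List.length_cons]
    change _ = _ + if c = chL true (bl true w) d then 1 else 0
    omega

theorem cnt_bf2 (w : List Ch) (c : Fin 3) :
    (cnt (bf false w) c + if c = bl false w then 1 else 0) = w.length + 1 := by
  induction w with
  | nil => revert c; decide
  | cons d w ih =>
    have D : ∀ (l : Fin 3) (d : Ch) (c : Fin 3),
      (if c = chL false l d then 1 else 0) + (Finset.univ.filter (fun i => rc (chRow false l d) i = c)).card
      = 1 + if c = l then 1 else 0 := by decide
    have := D (bl false w) d c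
    change (cnt (ext (bf false w) _) c + if c = chL false (bl false w) d then 1 else 0) = _
    rw [cnt_ext, List.length_cons]
    omega

theorem cnt_ge (m : Bool) (w : List Ch) (c : Fin 3) : w.length ≤ cnt (bf m w) c := by
  cases m
  · have := cnt_bf2 w c
    split_ifs at this <;> omega
  · have := cnt_bf1 w c
    omega

theorem main_inj (m : Bool) : ∀ w w' : List Ch, w.length = w'.length → w ≠ [] →
    (∀ c ∈ w.getLast?, okc m c = true) → (∀ c ∈ w'.getLast?, okc m c = true) →
    ∀ (σ : (bf m w).V ≃ (bf m w').V) (π : Equiv.Perm (Fin 3)), FIso (bf m w) (bf m w') σ π →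
    w = w' ∧ π = 1 := by
  intro w
  induction w with
  | nil => intro w' _ h; exact absurd rfl h
  | cons c w ih =>
    intro w' hl _ ok ok' σ π h
    cases w' with
    | nil => simp at hl
    | cons c' w' =>
      cases w with
      | nil =>
        cases w' with
        | cons _ _ => simp at hl
        | nil =>
          obtain ⟨a, b⟩ := base_inj (ok c (by simp)) (ok' c' (by simp)) h
          exact ⟨by rw [a], b⟩
      | cons d v =>
        cases w' with
        | nil => simp at hl
        | cons d' v' =>
          have l1 : 1 ≤ (d :: v).length := by simp
          obtain ⟨⟨s, hs⟩, h2, h3⟩ := step2 (F := bf m (d :: v)) (G := bf m (d' :: v')) (bf_ok m _)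
            (chRow m (bl m (d :: v)) c) (chRow m (bl m (d' :: v')) c')
            (by
              intro e
              have := cnt_ge m (d :: v) e
              have h0 : 0 < cnt (bf m (d :: v)) e := by omega
              obtain ⟨x, hx⟩ := Finset.card_pos.1 h0
              exact ⟨x, (Finset.mem_filter.1 hx).2⟩)
            (by
              intro e x
              have := cnt_ge m (c :: d :: v) e
              have h0 : 1 < cnt (bf m (c :: d :: v)) e := by simp at this; omega
              obtain ⟨y, hy, hxy⟩ := Finset.exists_mem_ne h0 x
              exact ⟨y, hxy, (Finset.mem_filter.1 hy).2⟩) h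
          obtain ⟨e1, e2⟩ := ih (d' :: v') (by simpa using hl) (by simp) (by simpa using ok)
            (by simpa using ok') s π hs
          refine ⟨?_, e2⟩
          subst e2
          rw [← e1] at h2 h3 ⊢
          have D : ∀ (m : Bool) (l : Fin 3) (c c' : Ch),
            (∀ i, rc (chRow m l c') i = rc (chRow m l c) i) →
            (∀ i j, rg (chRow m l c') i j = rg (chRow m l c) i j) → c = c' := by decide
          rw [D m _ c c' h2 h3]

end TuranX

namespace TuranX

/-- indicator -/
def I (p : Prop) [Decidable p] : ℤ := if p then 1 else 0

theorem I_congr {p q : Prop} [Decidable p] [Decidable q] (h : p ↔ q) : I p = I q := by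
  unfold I
  by_cases hq : q
  · rw [if_pos hq, if_pos (h.2 hq)]
  · rw [if_neg hq, if_neg (fun hp => hq (h.1 hp))]

theorem s3 {A B C : Type} [Fintype A] [Fintype B] [Fintype C] (f : A → B → C → ℤ) :
    ∑ x, ∑ y, ∑ z, f x y z = ∑ z, ∑ x, ∑ y, f x y z := by
  rw [Finset.sum_comm (s := (Finset.univ : Finset C))]
  exact Finset.sum_congr rfl fun x _ => Finset.sum_comm

def NN (F : Fr) : ℤ := ∑ x, ∑ y, ∑ z, I (F.T x y z)

theorem one_row {F : Fr} (h : Ok F) (ρ : Row) (x y : F.V) :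
    ∑ i : Fin 3, I ((ext F ρ).T (Sum.inr i) (Sum.inl x) (Sum.inl y)) =
      2 - I (F.κ x = F.κ y) - I (x = y) := by
  have A := ext_top h ρ
  by_cases xy : x = y
  · subst xy
    have : ∀ i : Fin 3, I ((ext F ρ).T (Sum.inr i) (Sum.inl x) (Sum.inl x)) = 0 := by
      intro i
      unfold I
      rw [if_neg]
      exact fun e => e.2.2.1 rfl
    simp only [this]
    simp [I]
  by_cases k : F.κ x = F.κ y
  · have : ∀ i : Fin 3, I ((ext F ρ).T (Sum.inr i) (Sum.inl x) (Sum.inl y)) =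
        if F.κ x = i then 1 else 0 := by
      intro i
      rw [I_congr (A.t1s i (Sum.inl x) (Sum.inl y) (by simp) (by simp) (by simpa using xy) k)]
      rfl
    simp only [this]
    simp [I, k, xy]
  · have D : ∀ (a b : Fin 3) (s : Bool), a ≠ b → 
      ∑ i : Fin 3, (if i = a then (if s then 1 else 0) else if i = b then (if s then 0 else 1)
        else 1 : ℤ) = 2 := by decide
    have : ∀ i : Fin 3, I ((ext F ρ).T (Sum.inr i) (Sum.inl x) (Sum.inl y)) =
        if i = F.κ x then (if F.r y x then 1 else 0) else if i = F.κ y then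
          (if F.r y x then 0 else 1) else 1 := by
      intro i
      by_cases ix : i = F.κ x
      · rw [I_congr (A.t1m i (Sum.inl x) (Sum.inl y) (by simp) (by simp) ix.symm
          (by rw [ix]; exact Ne.symm k)), if_pos ix]
        rfl
      by_cases iy : i = F.κ y
      · have e : ((ext F ρ).T (Sum.inr i) (Sum.inl x) (Sum.inl y)) ↔
          ((ext F ρ).T (Sum.inr i) (Sum.inl y) (Sum.inl x)) := ⟨T_flip, T_flip⟩
        rw [if_neg ix, if_pos iy, I_congr e, I_congr (A.t1m i (Sum.inl y) (Sum.inl x) (by simp) (by simp) iy.symm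
          (by rw [iy]; exact k))]
        have := h.diff x y k
        simp only [I]
        rw [this]
        cases F.r y x <;> simp
      · have := A.t1d i (Sum.inl x) (Sum.inl y) (by simp) (by simp) k (Ne.symm ix) (Ne.symm iy)
        rw [if_neg ix, if_neg iy]
        unfold I
        rw [if_pos this]
    simp only [this]
    rw [D _ _ _ k]
    simp [I, k, xy]

theorem two_row {F : Fr} (h : Ok F) (ρ : Row) (x : F.V) :
    ∑ i : Fin 3, ∑ j : Fin 3, I ((ext F ρ).T (Sum.inr i) (Sum.inr j) (Sum.inl x)) = 4 := by
  have A := ext_top h ρ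
  have D : ∀ a : Fin 3, ∑ i : Fin 3, ∑ j : Fin 3, (if i ≠ j ∧ (a = i ∨ a = j) then 1 else 0 : ℤ) = 4 := by
    decide
  rw [← D (F.κ x)]
  refine Finset.sum_congr rfl fun i _ => Finset.sum_congr rfl fun j _ => ?_
  by_cases ij : i = j
  · subst ij
    unfold I
    rw [if_neg (fun e => e.1 rfl)]
    simp
  · refine I_congr ((A.t2 i j (Sum.inl x) ij (by simp)).trans ?_)
    simp [ij]

theorem three_row {F : Fr} (h : Ok F) (ρ : Row) :
    ∑ i : Fin 3, ∑ j : Fin 3, ∑ l : Fin 3,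
      I ((ext F ρ).T (Sum.inr i) (Sum.inr j) (Sum.inr l)) = 6 := by
  have A := ext_top h ρ
  have D : ∑ i : Fin 3, ∑ j : Fin 3, ∑ l : Fin 3, (if i ≠ j ∧ i ≠ l ∧ j ≠ l then 1 else 0 : ℤ) = 6 := by
    decide
  rw [← D]
  refine Finset.sum_congr rfl fun i _ => Finset.sum_congr rfl fun j _ =>
    Finset.sum_congr rfl fun l _ => ?_
  unfold I
  by_cases hh : i ≠ j ∧ i ≠ l ∧ j ≠ l
  · rw [if_pos hh, if_pos (A.t3 i j l hh.1 hh.2.1 hh.2.2)]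
  · rw [if_neg hh, if_neg]
    intro e
    exact hh ⟨fun q => e.1 (q ▸ rfl), fun q => e.2.1 (q ▸ rfl), fun q => e.2.2.1 (q ▸ rfl)⟩

theorem sum_kk (F : Fr) : ∑ x, ∑ y, I (F.κ x = F.κ y) = ∑ c, (cnt F c : ℤ) ^ 2 := by
  have : ∀ x y, I (F.κ x = F.κ y) = ∑ c, I (F.κ x = c) * I (F.κ y = c) := by
    intro x y
    unfold I
    simp [eq_comm]
  simp only [this]
  have h2 : ∀ c, (cnt F c : ℤ) = ∑ x, I (F.κ x = c) := by
    intro c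
    unfold cnt I
    rw [Finset.card_filter]
    push_cast
    simp
  simp only [h2, sq, Finset.sum_mul_sum]
  rw [Finset.sum_comm]
  conv_rhs => rw [Finset.sum_comm]
  conv_lhs => rw [Finset.sum_comm]
  refine Finset.sum_congr rfl fun x _ => ?_
  rw [Finset.sum_comm]

theorem NN_ext {F : Fr} (h : Ok F) (ρ : Row) :
    NN (ext F ρ) = NN F + 3 * (2 * (Fintype.card F.V : ℤ) ^ 2 - ∑ c, (cnt F c : ℤ) ^ 2 -
      Fintype.card F.V) + 12 * Fintype.card F.V + 6 := by
  let t : F.V ⊕ Fin 3 → F.V ⊕ Fin 3 → F.V ⊕ Fin 3 → ℤ := fun x y z => I ((ext F ρ).T x y z)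
  have ts : ∀ x y z, t x y z = t y x z := fun x y z => I_congr ⟨T_swap, T_swap⟩
  have tr : ∀ x y z, t x y z = t y z x := fun x y z => I_congr ((sy _).rot _ _ _)
  have e0 : NN (ext F ρ) = ∑ x, ∑ y, ∑ z, t x y z := rfl
  have e1 : ∀ x y z, t (.inl x) (.inl y) (.inl z) = I (F.T x y z) := by
    intro x y z
    refine I_congr ?_
    rw [T_iff, T_iff]
    simp
  have e2 : ∑ i : Fin 3, ∑ x, ∑ y, t (.inr i) (.inl x) (.inl y) =
      2 * (Fintype.card F.V : ℤ) ^ 2 - ∑ c, (cnt F c : ℤ) ^ 2 - Fintype.card F.V := by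
    rw [Finset.sum_comm]
    have : ∀ x : F.V, ∑ i : Fin 3, ∑ y, t (.inr i) (.inl x) (.inl y) =
      ∑ y, (2 - I (F.κ x = F.κ y) - I (x = y)) := by
      intro x
      rw [Finset.sum_comm]
      exact Finset.sum_congr rfl fun y _ => one_row h ρ x y
    simp only [this, Finset.sum_sub_distrib]
    rw [sum_kk]
    simp [I]
    ring
  have e3 : ∑ i : Fin 3, ∑ j : Fin 3, ∑ x, t (.inr i) (.inr j) (.inl x) = 4 * Fintype.card F.V := by
    have : ∀ i, ∑ j : Fin 3, ∑ x, t (.inr i) (.inr j) (.inl x) =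
      ∑ x, ∑ j : Fin 3, t (.inr i) (.inr j) (.inl x) := fun i => Finset.sum_comm
    simp only [this]
    rw [Finset.sum_comm, Finset.sum_congr rfl fun x _ => two_row h ρ x]
    simp
    ring
  have e4 : ∑ i : Fin 3, ∑ j : Fin 3, ∑ l : Fin 3, t (.inr i) (.inr j) (.inr l) = 6 := three_row h ρ
  rw [e0]
  simp only [Fintype.sum_sum_type, Finset.sum_add_distrib]
  have f1 : ∑ x, ∑ y, ∑ i : Fin 3, t (.inl x) (.inl y) (.inr i) =
      ∑ i : Fin 3, ∑ x, ∑ y, t (.inr i) (.inl x) (.inl y) := by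
    rw [s3]
    simp only [tr (.inr _)]
  have f2 : ∑ x, ∑ i : Fin 3, ∑ y, t (.inl x) (.inr i) (.inl y) =
      ∑ i : Fin 3, ∑ x, ∑ y, t (.inr i) (.inl x) (.inl y) := by
    rw [Finset.sum_comm]
    simp only [ts (.inr _)]
  have f3 : ∑ x, ∑ i : Fin 3, ∑ j : Fin 3, t (.inl x) (.inr i) (.inr j) =
      ∑ i : Fin 3, ∑ j : Fin 3, ∑ x, t (.inr i) (.inr j) (.inl x) := by
    rw [s3 (fun i j x => t (.inr i) (.inr j) (.inl x))]
    refine Finset.sum_congr rfl fun i _ => Finset.sum_congr rfl fun j _ =>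
      Finset.sum_congr rfl fun x _ => ?_
    rw [tr]
  have f4 : ∑ i : Fin 3, ∑ x, ∑ j : Fin 3, t (.inr i) (.inl x) (.inr j) =
      ∑ i : Fin 3, ∑ j : Fin 3, ∑ x, t (.inr i) (.inr j) (.inl x) := by
    refine Finset.sum_congr rfl fun i _ => ?_
    rw [Finset.sum_comm]
    refine Finset.sum_congr rfl fun j _ => Finset.sum_congr rfl fun x _ => ?_
    rw [ts, tr]
  rw [f1, f2, f3, f4, e2, e3, e4]
  simp only [e1]
  unfold NN
  ring

theorem card_bf (m : Bool) (w : List Ch) :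
    Fintype.card (bf m w).V = 3 * w.length + if m then 1 else 2 := by
  induction w with
  | nil => cases m <;> rfl
  | cons c w ih =>
    have : Fintype.card (bf m (c :: w)).V = Fintype.card ((bf m w).V ⊕ Fin 3) := rfl
    rw [this, Fintype.card_sum, ih]
    simp
    omega

def poly (m : Bool) (q : ℤ) : ℤ :=
  if m then 15 * q ^ 3 + 6 * q ^ 2 - 3 * q else 15 * q ^ 3 + 21 * q ^ 2 + 6 * q

theorem sq_bf1 (w : List Ch) :
    ∑ c, (cnt (bf true w) c : ℤ) ^ 2 = 2 * (w.length : ℤ) ^ 2 + (w.length + 1) ^ 2 := by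
  simp only [cnt_bf1]
  generalize bl true w = l
  rw [Fin.sum_univ_three]
  rcases F3 0 1 2 l (by decide) (by decide) (by decide) with rfl | rfl | rfl <;> simp <;> ring

theorem sq_bf2 (w : List Ch) :
    ∑ c, (cnt (bf false w) c : ℤ) ^ 2 = 2 * (w.length + 1 : ℤ) ^ 2 + w.length ^ 2 := by
  have : ∀ c, (cnt (bf false w) c : ℤ) = w.length + if c = bl false w then 0 else 1 := by
    intro c
    have := cnt_bf2 w c
    split_ifs at this ⊢ <;> omega
  simp only [this]
  generalize bl false w = l
  rw [Fin.sum_univ_three]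
  rcases F3 0 1 2 l (by decide) (by decide) (by decide) with rfl | rfl | rfl <;> simp <;> ring

theorem NN_step (m : Bool) (w : List Ch) (ρ : Row) (h : NN (bf m w) = poly m w.length) :
    NN (ext (bf m w) ρ) = poly m (w.length + 1) := by
  rw [NN_ext (bf_ok m w), h, card_bf]
  cases m
  · rw [sq_bf2]
    simp [poly]
    ring
  · rw [sq_bf1]
    simp [poly]
    ring

theorem NN_bf (m : Bool) (w : List Ch) : NN (bf m w) = poly m w.length := by
  induction w with
  | nil => cases m <;> decide
  | cons c w ih =>
    have := NN_step m w (chRow m (bl m w) c) ih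
    rw [List.length_cons]
    push_cast
    exact this

end TuranX


namespace TuranX

def Tset (F : Fr) {n : ℕ} (e : F.V ≃ Fin n) : Finset (Finset (Fin n)) :=
  (Finset.univ.filter (fun p : F.V × F.V × F.V => F.T p.1 p.2.1 p.2.2)).image
    (fun p => {e p.1, e p.2.1, e p.2.2})

section
variable {F : Fr} {n : ℕ} (e : F.V ≃ Fin n)

theorem trip {A : Type} [DecidableEq A] {x y z a b c : A} (xy : x ≠ y) (xz : x ≠ z) (yz : y ≠ z)
    (h : ({x, y, z} : Finset A) = {a, b, c}) :
    (a = x ∧ b = y ∧ c = z) ∨ (a = x ∧ b = z ∧ c = y) ∨ (a = y ∧ b = x ∧ c = z) ∨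
    (a = y ∧ b = z ∧ c = x) ∨ (a = z ∧ b = x ∧ c = y) ∨ (a = z ∧ b = y ∧ c = x) := by
  have h1 : x ∈ ({a, b, c} : Finset A) := by rw [← h]; simp
  have h2 : y ∈ ({a, b, c} : Finset A) := by rw [← h]; simp
  have h3 : z ∈ ({a, b, c} : Finset A) := by rw [← h]; simp
  simp only [Finset.mem_insert, Finset.mem_singleton] at h1 h2 h3
  clear h
  grind

theorem mem_T (x y z : F.V) : ({e x, e y, e z} : Finset (Fin n)) ∈ Tset F e ↔ F.T x y z := by
  unfold Tset
  simp only [Finset.mem_image, Finset.mem_filter, Finset.mem_univ, true_and]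
  constructor
  · rintro ⟨⟨a, b, c⟩, h1, h2⟩
    have := trip (e.injective.ne h1.1) (e.injective.ne h1.2.1) (e.injective.ne h1.2.2.1) h2
    simp only [e.injective.eq_iff] at this
    have s1 := (sy F).swap
    have s2 := (sy F).rot
    grind
  · intro h
    exact ⟨(x, y, z), h, rfl⟩

theorem mem_T' (t : Finset (Fin n)) (h : t ∈ Tset F e) :
    ∃ x y z, F.T x y z ∧ t = {e x, e y, e z} := by
  unfold Tset at h
  simp only [Finset.mem_image, Finset.mem_filter, Finset.mem_univ, true_and] at h
  obtain ⟨⟨a, b, c⟩, h1, h2⟩ := h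
  exact ⟨a, b, c, h1, h2.symm⟩

theorem valid (h : Ok F) : ValidTriangleFamily n (Tset F e) := by
  constructor
  · intro t ht
    obtain ⟨x, y, z, h1, rfl⟩ := mem_T' e t ht
    exact Finset.card_eq_three.2 ⟨_, _, _, e.injective.ne h1.1, e.injective.ne h1.2.1,
      e.injective.ne h1.2.2.1, rfl⟩
  · intro s hs
    obtain ⟨a, s', ha, rfl, hs'⟩ := Finset.card_eq_succ.1 hs
    obtain ⟨b, c, d, bc, bd, cd, rfl⟩ := Finset.card_eq_three.1 hs'
    obtain ⟨a, rfl⟩ := e.surjective a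
    obtain ⟨b, rfl⟩ := e.surjective b
    obtain ⟨c, rfl⟩ := e.surjective c
    obtain ⟨d, rfl⟩ := e.surjective d
    by_contra hc
    push Not at hc
    simp only [Finset.mem_insert, Finset.mem_singleton, not_or] at ha
    obtain ⟨ab, ac, ad⟩ := ha
    refine no_four h a b c d ?_ ?_ ?_ ?_
    · rw [← mem_T e]
      refine hc _ ?_ (Finset.card_eq_three.2 ⟨_, _, _, ab, ac, bc, rfl⟩)
      intro x; simp only [Finset.mem_insert, Finset.mem_singleton]; tauto
    · rw [← mem_T e]
      refine hc _ ?_ (Finset.card_eq_three.2 ⟨_, _, _, ab, ad, bd, rfl⟩)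
      intro x; simp only [Finset.mem_insert, Finset.mem_singleton]; tauto
    · rw [← mem_T e]
      refine hc _ ?_ (Finset.card_eq_three.2 ⟨_, _, _, ac, ad, cd, rfl⟩)
      intro x; simp only [Finset.mem_insert, Finset.mem_singleton]; tauto
    · rw [← mem_T e]
      refine hc _ ?_ (Finset.card_eq_three.2 ⟨_, _, _, bc, bd, cd, rfl⟩)
      intro x; simp only [Finset.mem_insert, Finset.mem_singleton]; tauto

theorem card_T : 6 * ((Tset F e).card : ℤ) = NN F := by
  have h1 : NN F = ((Finset.univ.filter (fun p : F.V × F.V × F.V => F.T p.1 p.2.1 p.2.2)).card : ℤ) := by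
    rw [Finset.card_filter]
    push_cast
    rw [Fintype.sum_prod_type]
    unfold NN I
    refine Finset.sum_congr rfl fun x _ => ?_
    rw [Fintype.sum_prod_type]
  have h2 := Finset.card_eq_sum_card_image
    (fun p : F.V × F.V × F.V => ({e p.1, e p.2.1, e p.2.2} : Finset (Fin n)))
    (Finset.univ.filter (fun p : F.V × F.V × F.V => F.T p.1 p.2.1 p.2.2))
  have h3 : ∀ t ∈ Tset F e, ((Finset.univ.filter (fun p : F.V × F.V × F.V => F.T p.1 p.2.1 p.2.2)).filter
      (fun p : F.V × F.V × F.V => ({e p.1, e p.2.1, e p.2.2} : Finset (Fin n)) = t)).card = 6 := by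
    intro t ht
    obtain ⟨x, y, z, h, rfl⟩ := mem_T' e t ht
    obtain ⟨xy, xz, yz, -⟩ := id h
    have : ((Finset.univ.filter (fun p : F.V × F.V × F.V => F.T p.1 p.2.1 p.2.2)).filter
      (fun p : F.V × F.V × F.V => ({e p.1, e p.2.1, e p.2.2} : Finset (Fin n)) = {e x, e y, e z})) =
      {(x, y, z), (x, z, y), (y, x, z), (y, z, x), (z, x, y), (z, y, x)} := by
      ext ⟨a, b, c⟩
      simp only [Finset.mem_filter, Finset.mem_univ, true_and, Finset.mem_insert,
        Finset.mem_singleton, Prod.mk.injEq]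
      constructor
      · rintro ⟨h1, h2⟩
        have := trip (e.injective.ne xy) (e.injective.ne xz) (e.injective.ne yz) h2.symm
        simpa only [e.injective.eq_iff] using this
      · intro hh
        have s1 := T_swap h
        have s2 := T_flip h
        have s3 := T_rot h
        have s4 := T_rot s3
        have s5 := T_rot s2
        have s6 := T_rot s5
        refine ⟨by grind, ?_⟩
        ext w
        simp only [Finset.mem_insert, Finset.mem_singleton]
        grind
    rw [this]
    have := xy.symm
    have := xz.symm
    have := yz.symm
    rw [Finset.card_insert_of_notMem, Finset.card_insert_of_notMem, Finset.card_insert_of_notMem,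
      Finset.card_insert_of_notMem, Finset.card_insert_of_notMem, Finset.card_singleton] <;>
      simp [*]
  rw [h1, h2]
  change _ = ((∑ t ∈ Tset F e, _ : ℕ) : ℤ)
  rw [Finset.sum_congr rfl h3]
  simp
  ring

theorem iso_T {G : Fr} (g : G.V ≃ Fin n) (h : IsoTriangleFamily n (Tset F e) (Tset G g)) :
    ∃ σ : F.V ≃ G.V, ∀ x y z, G.T (σ x) (σ y) (σ z) ↔ F.T x y z := by
  obtain ⟨σ, h⟩ := h
  refine ⟨(e.trans σ).trans g.symm, ?_⟩
  intro x y z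
  rw [← mem_T e, h, ← mem_T g]
  simp [Finset.image_insert]
end

theorem fam (m : Bool) (q n : ℕ) (hn : n = 3 * (q + 1) + if m then 1 else 2) (P : Type) [Fintype P]
    (wd : P → List Ch) (inj : Function.Injective wd) (len : ∀ p, (wd p).length = q)
    (ok : ∀ p, ∀ c ∈ (wd p).getLast?, okc m c = true) :
    ∃ 𝒯 : Finset (Finset (Finset (Fin n))),
      (∀ T ∈ 𝒯, ValidTriangleFamily n T ∧ (T.card : ℚ) = turanBound n) ∧
      (∀ T₁ ∈ 𝒯, ∀ T₂ ∈ 𝒯, T₁ ≠ T₂ → ¬ IsoTriangleFamily n T₁ T₂) ∧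
      𝒯.card = Fintype.card P := by
  classical
  have hc : ∀ p, Fintype.card (ext (bf m (wd p)) (.inl true)).V = n := by
    intro p
    have : Fintype.card (ext (bf m (wd p)) (.inl true)).V = Fintype.card ((bf m (wd p)).V ⊕ Fin 3) := rfl
    rw [this, Fintype.card_sum, card_bf, len, hn]
    simp
    omega
  let e : ∀ p, (ext (bf m (wd p)) (.inl true)).V ≃ Fin n := fun p => Fintype.equivFinOfCardEq (hc p)
  have key : ∀ p p', IsoTriangleFamily n (Tset _ (e p)) (Tset _ (e p')) → p = p' := by
    intro p p' h
    obtain ⟨σ, hσ⟩ := iso_T _ _ h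
    obtain ⟨s, π, hs⟩ := step1 (bf_ok m _) (bf_ok m _) _ _ σ hσ
    apply inj
    by_cases w0 : wd p = []
    · have := len p
      rw [w0] at this
      have h2 := len p'
      rw [← this] at h2
      rw [w0, List.length_eq_zero_iff.1 h2]
    · exact (main_inj m _ _ (by rw [len, len]) w0 (ok p) (ok p') s π hs).1
  refine ⟨Finset.univ.image (fun p => Tset _ (e p)), ?_, ?_, ?_⟩
  · intro T hT
    obtain ⟨p, -, rfl⟩ := Finset.mem_image.1 hT
    refine ⟨valid _ (ext_ok (bf_ok m _) _), ?_⟩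
    have h1 := card_T (e p)
    rw [NN_step m _ _ (NN_bf m _), len] at h1
    have h2 : (6 : ℚ) * ((Tset _ (e p)).card : ℚ) = ((poly m (q + 1) : ℤ) : ℚ) := by
      rw [← h1]; push_cast; rfl
    have h3 : ((Tset _ (e p)).card : ℚ) = ((poly m (q + 1) : ℤ) : ℚ) / 6 := by
      rw [← h2]; ring
    rw [h3]
    unfold turanBound
    cases m
    · have d1 : n / 3 = q + 1 := by simp at hn; omega
      have d2 : n % 3 = 2 := by simp at hn; omega
      simp [d1, d2, poly]
      ring
    · have d1 : n / 3 = q + 1 := by simp at hn; omega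
      have d2 : n % 3 = 1 := by simp at hn; omega
      simp [d1, d2, poly]
      ring
  · intro T₁ h1 T₂ h2 ne h
    obtain ⟨p, -, rfl⟩ := Finset.mem_image.1 h1
    obtain ⟨p', -, rfl⟩ := Finset.mem_image.1 h2
    exact ne (by rw [key p p' h])
  · rw [Finset.card_image_of_injective, Finset.card_univ]
    intro p p' h
    apply key
    simp only at h
    rw [h]
    exact ⟨1, fun t => by simp⟩

end TuranX

theorem many_nonisomorphic_turan_extremal (k : ℕ) (hk : 1 ≤ k) (n : ℕ)
    (hn : n = 3 * k + 1 ∨ n = 3 * k + 2) :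
    ∃ 𝒯 : Finset (Finset (Finset (Fin n))),
      (∀ T ∈ 𝒯, ValidTriangleFamily n T ∧ (T.card : ℚ) = turanBound n) ∧
      (∀ T₁ ∈ 𝒯, ∀ T₂ ∈ 𝒯, T₁ ≠ T₂ → ¬ IsoTriangleFamily n T₁ T₂) ∧
      (n = 3 * k + 1 → (1 / 2 : ℚ) * 6 ^ (k - 1) ≤ (𝒯.card : ℚ)) ∧
      (n = 3 * k + 2 → (6 : ℚ) ^ (k - 1) ≤ (𝒯.card : ℚ)) := by
  obtain ⟨q, rfl⟩ : ∃ q, k = q + 1 := ⟨k - 1, by omega⟩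
  rcases hn with hn | hn
  · cases q with
    | zero =>
      obtain ⟨𝒯, h1, h2, h3⟩ := TuranX.fam true 0 n (by simpa using hn) Unit (fun _ => [])
        (fun _ _ _ => rfl) (by simp) (by simp)
      refine ⟨𝒯, h1, h2, fun _ => ?_, fun h => by omega⟩
      rw [h3]
      norm_num
    | succ p =>
      obtain ⟨𝒯, h1, h2, h3⟩ := TuranX.fam true (p + 1) n (by simpa using hn)
        ((Fin p → TuranX.Ch) × {c : TuranX.Ch // TuranX.okc true c = true})
        (fun u => List.ofFn u.1 ++ [u.2.1])
        (by
          rintro ⟨u, c⟩ ⟨u', c'⟩ h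
          have h' := List.append_inj h (by simp)
          simp only [List.ofFn_inj, List.cons.injEq, and_true] at h'
          exact Prod.ext h'.1 (Subtype.ext h'.2)) (by simp)
        (by
          rintro ⟨u, c⟩ d hd
          simp at hd
          rw [← hd]
          exact c.2)
      refine ⟨𝒯, h1, h2, fun _ => ?_, fun h => by omega⟩
      have h4 : Fintype.card {c : TuranX.Ch // TuranX.okc true c = true} = 3 := by decide
      rw [h3, Fintype.card_prod, h4]
      simp
      rw [pow_succ]
      apply le_of_eq
      ring
  · obtain ⟨𝒯, h1, h2, h3⟩ := TuranX.fam false q n (by simpa using hn) (Fin q → TuranX.Ch)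
        List.ofFn List.ofFn_injective (by simp) (by intro p c _; rfl)
    refine ⟨𝒯, h1, h2, fun h => by omega, fun _ => ?_⟩
    rw [h3]
    simp
end
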